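/- arXiv:2104.12584 — 3 statements merged into one kernel-verified Lean document; each statement's English description precedes it below -/
import Mathlib

section
/- Let A ⊂ ℤⁿ be a finite set with 0 possibly in A, and let c_ω > 0 for ω ∈ A. Assume there exists φ₀ ∈ ℝⁿ with ⟨φ₀, ω⟩ > 0 for every ω ∈ A∖{0} (the cone generated by A is pointed) and that A∖{0} spans ℝⁿ (the cone is n-dimensional). Set p(x) := Σ_{ω∈A} c_ω x^ω for x ∈ ℝⁿ_{>0}, let C := Σ_{ω∈A} ℝ_{≥0}·ω, let C* := {φ ∈ ℝⁿ : ⟨φ, ω⟩ ≥ 0 for all ω ∈ A}, and let c₀ := c_0 if 0 ∈ A and c₀ := 0 otherwise (the constant term of p). Then for every X in the interior of C: lim_{α→0⁺} αⁿ · ∫_{ℝⁿ_{>0}} e^{−p(x)} · ∏_{i=1}^n x_i^{αX_i−1} dx = e^{−c₀} · ∫_{C*} e^{−⟨φ,X⟩} dφ, where both integrals are Lebesgue integrals. -/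
open MeasureTheory Real

theorem integrable_exp_neg_mul_sum_abs {n : ℕ} {ε : ℝ} (hε : 0 < ε) :
    Integrable (fun φ : Fin n → ℝ => Real.exp (-(ε * ∑ i, |φ i|))) := by
  have one : Integrable (fun x : ℝ => Real.exp (-(ε * |x|))) := by
    rw [← integrableOn_univ, ← Set.Iic_union_Ioi (a := (0 : ℝ))]
    refine IntegrableOn.union ?_ ?_
    · refine (integrableOn_exp_mul_Iic hε 0).congr_fun (fun x hx => ?_) measurableSet_Iic
      simp [abs_of_nonpos (Set.mem_Iic.1 hx)]
    · refine (integrableOn_exp_mul_Ioi (neg_lt_zero.2 hε) 0).congr_fun (fun x hx => ?_)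
        measurableSet_Ioi
      simp [abs_of_pos (Set.mem_Ioi.1 hx)]
  refine (Integrable.fintype_prod (f := fun (_ : Fin n) x => Real.exp (-(ε * |x|)))
    fun _ => one).congr (Filter.Eventually.of_forall fun φ => ?_)
  simp only [← Real.exp_sum, Finset.sum_neg_distrib, Finset.mul_sum]

theorem neg_mul_exp_sub_mul_le {c t s α : ℝ} (hc : 0 < c) (ht : 0 ≤ t) (hα : 0 < α)
    (hα1 : α ≤ 1) : -(c * Real.exp (-s / α)) - t * s ≤ t ^ 2 / (2 * c) := by
  rcases le_total 0 s with hs | hs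
  · have : 0 ≤ t ^ 2 / (2 * c) := by positivity
    nlinarith [mul_pos hc (Real.exp_pos (-s / α)), mul_nonneg ht hs]
  · have h1 : -s ≤ -s / α := le_div_self (by linarith) hα hα1
    have h2 : s ^ 2 / 2 ≤ Real.exp (-s / α) := by
      have := Real.quadratic_le_exp_of_nonneg (neg_nonneg.2 hs)
      have := Real.exp_le_exp.2 h1
      nlinarith
    have h3 : c * (s ^ 2 / 2) ≤ c * Real.exp (-s / α) := by gcongr
    rw [le_div_iff₀ (by positivity)]
    nlinarith [sq_nonneg (t + c * s)]

theorem tendsto_neg_div_atBot {s : ℝ} (hs : 0 < s) :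
    Filter.Tendsto (fun α : ℝ => -s / α) (nhdsWithin 0 (Set.Ioi 0)) Filter.atBot := by
  simp_rw [div_eq_mul_inv]
  exact tendsto_inv_nhdsGT_zero.const_mul_atTop_of_neg (neg_lt_zero.2 hs)

theorem tendsto_neg_div_atTop {s : ℝ} (hs : s < 0) :
    Filter.Tendsto (fun α : ℝ => -s / α) (nhdsWithin 0 (Set.Ioi 0)) Filter.atTop := by
  simp_rw [div_eq_mul_inv]
  exact tendsto_inv_nhdsGT_zero.const_mul_atTop (neg_pos.2 hs)

theorem ae_sum_mul_ne_zero {n : ℕ} {w : Fin n → ℝ} (hw : w ≠ 0) :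
    ∀ᵐ φ : Fin n → ℝ, ∑ i, φ i * w i ≠ 0 := by
  let L : (Fin n → ℝ) →ₗ[ℝ] ℝ := ∑ i, w i • LinearMap.proj i
  have hL : ∀ φ, L φ = ∑ i, φ i * w i := fun φ => by
    simp [L, LinearMap.sum_apply, mul_comm]
  have hker : LinearMap.ker L ≠ ⊤ := by
    intro h
    obtain ⟨j, hj⟩ := Function.ne_iff.1 hw
    have h0 : L (Pi.single j 1) = 0 := by
      rw [← LinearMap.mem_ker, h]; trivial
    rw [hL] at h0
    simp [Pi.single_apply] at h0
    exact hj h0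
  have := Measure.addHaar_submodule (volume : Measure (Fin n → ℝ)) _ hker
  rw [ae_iff]
  convert this using 2
  ext φ
  simp [hL]

/-- The substitution `x = exp (-φ / α)`, coordinatewise, in an integral over the positive orthant. -/
theorem integral_pi_Ioi_eq_integral_exp {n : ℕ} {α : ℝ} (hα : 0 < α) (g : (Fin n → ℝ) → ℝ) :
    ∫ x in Set.univ.pi fun _ : Fin n => Set.Ioi (0 : ℝ), g x =
      ∫ φ : Fin n → ℝ, (α⁻¹ ^ n * ∏ i, Real.exp (-φ i / α)) *
        g (fun i => Real.exp (-φ i / α)) := by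
  let f : (Fin n → ℝ) → Fin n → ℝ := fun φ i => Real.exp (-φ i / α)
  let d : (Fin n → ℝ) → Fin n → ℝ := fun φ i => Real.exp (-φ i / α) * (-1 / α)
  let f' : (Fin n → ℝ) → (Fin n → ℝ) →L[ℝ] (Fin n → ℝ) := fun φ =>
    LinearMap.toContinuousLinearMap (Matrix.toLin' (Matrix.diagonal (d φ)))
  have hf' : ∀ φ ∈ Set.univ, HasFDerivWithinAt f (f' φ) Set.univ φ := by
    intro φ _
    rw [hasFDerivWithinAt_univ]
    refine hasFDerivAt_pi'' fun i => ?_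
    have h1 : HasFDerivAt (fun x : Fin n → ℝ => x i) (ContinuousLinearMap.proj (R := ℝ) i) φ :=
      hasFDerivAt_apply i φ
    have h2 : HasDerivAt (fun y : ℝ => Real.exp (-y / α)) (d φ i) (φ i) :=
      (((hasDerivAt_id (φ i)).neg).div_const α).exp
    refine (h2.comp_hasFDerivAt φ h1).congr_fderiv ?_
    ext v
    simp [f', Matrix.mulVec_diagonal]
  have hinj : Set.InjOn f Set.univ := by
    intro φ _ ψ _ h
    ext i
    have := Real.exp_injective (congrFun h i)
    field_simp at this
    linarith
  have himg : f '' Set.univ = Set.univ.pi fun _ : Fin n => Set.Ioi (0 : ℝ) := by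
    ext x
    simp only [Set.image_univ, Set.mem_range, Set.mem_univ_pi, Set.mem_Ioi]
    constructor
    · rintro ⟨φ, rfl⟩ i
      exact Real.exp_pos _
    · intro hx
      refine ⟨fun i => -(α * Real.log (x i)), funext fun i => ?_⟩
      simp only [f, neg_neg]
      rw [mul_div_cancel_left₀ _ hα.ne', Real.exp_log (hx i)]
  rw [← himg, integral_image_eq_integral_abs_det_fderiv_smul volume MeasurableSet.univ hf' hinj,
    setIntegral_univ]
  congr 1 with φ
  have hdet : |(f' φ).det| = α⁻¹ ^ n * ∏ i, Real.exp (-φ i / α) := by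
    simp only [f', LinearMap.det_toContinuousLinearMap, LinearMap.det_toLin',
      Matrix.det_diagonal, Finset.abs_prod, d, abs_mul, Real.abs_exp, abs_div, abs_neg, abs_one,
      abs_of_pos hα, Finset.prod_mul_distrib]
    simp [mul_comm]
  rw [hdet, smul_eq_mul]

/-- A point in the interior of the cone generated by `A` can be moved in every sign direction. -/
theorem exists_sub_sign_mem_cone {n : ℕ} {A : Finset (Fin n → ℤ)} {X : Fin n → ℝ}
    (hX : X ∈ interior {y | ∃ t : (Fin n → ℤ) → ℝ, (∀ ω, 0 ≤ t ω) ∧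
        y = ∑ ω ∈ A, t ω • fun i => (ω i : ℝ)}) :
    ∃ ε > 0, ∃ t : (Fin n → SignType) → (Fin n → ℤ) → ℝ, (∀ σ ω, 0 ≤ t σ ω) ∧
      ∀ σ i, X i = ε * (σ i : ℝ) + ∑ ω ∈ A, t σ ω * (ω i : ℝ) := by
  obtain ⟨ε, hε, hball⟩ := Metric.mem_nhds_iff.1 (mem_interior_iff_mem_nhds.1 hX)
  have key : ∀ σ : Fin n → SignType, (fun i => X i - ε / 2 * (σ i : ℝ)) ∈ Metric.ball X ε := by
    intro σ
    rw [Metric.mem_ball, dist_pi_lt_iff hε]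
    intro i
    have : |((σ i : SignType) : ℝ)| ≤ 1 := by
      cases σ i <;> simp
    rw [Real.dist_eq, sub_sub_cancel_left, abs_neg, abs_mul, abs_of_pos (half_pos hε)]
    nlinarith
  choose t ht0 ht using fun σ => hball (key σ)
  refine ⟨ε / 2, half_pos hε, t, ht0, fun σ i => ?_⟩
  have := congrFun (ht σ) i
  simp only [Finset.sum_apply, Pi.smul_apply, smul_eq_mul] at this
  linarith

/-- Pointwise limit of the rescaled integrand off the walls `s ω = 0`. -/
theorem tendsto_exp_neg_sum {ι : Type*} [Zero ι] [DecidableEq ι] {A : Finset ι} {c s : ι → ℝ}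
    (hc : ∀ ω ∈ A, 0 < c ω) (hs0 : s 0 = 0) (hs : ∀ ω ∈ A, ω ≠ 0 → s ω ≠ 0)
    [Decidable (∀ ω ∈ A, 0 ≤ s ω)] :
    Filter.Tendsto (fun α : ℝ => Real.exp (-∑ ω ∈ A, c ω * Real.exp (-s ω / α)))
      (nhdsWithin 0 (Set.Ioi 0))
      (nhds (if ∀ ω ∈ A, 0 ≤ s ω then Real.exp (-(if (0 : ι) ∈ A then c 0 else 0)) else 0)) := by
  by_cases hpos : ∀ ω ∈ A, 0 ≤ s ω
  · rw [if_pos hpos]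
    refine (Real.continuous_exp.tendsto _).comp (Filter.Tendsto.neg ?_)
    rw [← Finset.sum_ite_eq' A 0 c]
    refine tendsto_finsetSum A fun ω hω => ?_
    split_ifs with h
    · subst h
      simp [hs0]
    · simpa using (Real.tendsto_exp_atBot.comp
        (tendsto_neg_div_atBot ((hpos ω hω).lt_of_ne' (hs ω hω h)))).const_mul (c ω)
  · rw [if_neg hpos]
    push Not at hpos
    obtain ⟨ω, hω, hneg⟩ := hpos
    refine Real.tendsto_exp_neg_atTop_nhds_zero.comp
      (Filter.tendsto_atTop_mono (fun α => ?_)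
        ((Real.tendsto_exp_atTop.comp (tendsto_neg_div_atTop hneg)).const_mul_atTop (hc ω hω)))
    exact Finset.single_le_sum (f := fun ω => c ω * Real.exp (-s ω / α))
      (fun ω hω => mul_nonneg (hc ω hω).le (Real.exp_pos _).le) hω

/-- For a Laurent polynomial `p` with positive coefficients whose exponent cone is
pointed and `n`-dimensional, and `X` in the interior of that cone,
`lim_{α→0⁺} αⁿ ∫_{ℝⁿ_{>0}} e^{−p(x)} ∏ᵢ xᵢ^{αXᵢ−1} dx = e^{−c₀} ∫_{C*} e^{−⟨φ,X⟩} dφ`. -/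
theorem stmt_1 (n : ℕ) (A : Finset (Fin n → ℤ)) (c : (Fin n → ℤ) → ℝ)
    (hc : ∀ ω ∈ A, 0 < c ω)
    (hpointed : ∃ φ₀ : Fin n → ℝ, ∀ ω ∈ A, ω ≠ 0 → 0 < ∑ i, φ₀ i * (ω i : ℝ))
    (hspan : Submodule.span ℝ
        ((fun ω : Fin n → ℤ => fun i => (ω i : ℝ)) ''
          ((A : Set (Fin n → ℤ)) \ {0})) = ⊤)
    (p : (Fin n → ℝ) → ℝ)
    (hp : ∀ x, p x = ∑ ω ∈ A, c ω * ∏ i, x i ^ (ω i))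
    (C : Set (Fin n → ℝ))
    (hC : C = {y | ∃ t : (Fin n → ℤ) → ℝ, (∀ ω, 0 ≤ t ω) ∧
        y = ∑ ω ∈ A, t ω • fun i => (ω i : ℝ)})
    (Cstar : Set (Fin n → ℝ))
    (hCstar : Cstar = {φ | ∀ ω ∈ A, 0 ≤ ∑ i, φ i * (ω i : ℝ)})
    (c₀ : ℝ) (hc₀ : c₀ = if (0 : Fin n → ℤ) ∈ A then c 0 else 0)
    (X : Fin n → ℝ) (hX : X ∈ interior C) :
    Filter.Tendsto
      (fun α : ℝ => α ^ n *
        ∫ x in Set.univ.pi fun _ : Fin n => Set.Ioi (0 : ℝ),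
          Real.exp (-p x) * ∏ i, x i ^ (α * X i - 1))
      (nhdsWithin 0 (Set.Ioi 0))
      (nhds (Real.exp (-c₀) * ∫ φ in Cstar, Real.exp (-∑ i, φ i * X i))) := by
  classical
  subst hC hCstar hc₀
  let s : (Fin n → ℝ) → (Fin n → ℤ) → ℝ := fun φ ω => ∑ i, φ i * (ω i : ℝ)
  let G : ℝ → (Fin n → ℝ) → ℝ := fun α φ =>
    Real.exp (-∑ ω ∈ A, c ω * Real.exp (-s φ ω / α)) * Real.exp (-∑ i, φ i * X i)
  have hs_cont : ∀ ω, Continuous fun φ => s φ ω := fun ω => by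
    simp only [s]; fun_prop
  have hG_cont : ∀ α, Continuous (G α) := fun α => by
    simp only [G]; fun_prop
  have hsubst : ∀ α ∈ Set.Ioi (0 : ℝ), ∫ φ, G α φ = α ^ n *
      ∫ x in Set.univ.pi fun _ : Fin n => Set.Ioi (0 : ℝ),
        Real.exp (-p x) * ∏ i, x i ^ (α * X i - 1) := by
    intro α hα
    have hα : 0 < α := hα
    rw [integral_pi_Ioi_eq_integral_exp hα, ← integral_const_mul]
    congr 1 with φ
    have hmon : ∀ ω : Fin n → ℤ, ∏ i, Real.exp (-φ i / α) ^ (ω i) = Real.exp (-s φ ω / α) := by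
      intro ω
      simp only [← Real.rpow_intCast, ← Real.exp_mul, ← Real.exp_sum, s, ← Finset.sum_neg_distrib,
        Finset.sum_div]
      congr 1
      exact Finset.sum_congr rfl fun i _ => by ring
    have hpow : (∏ i, Real.exp (-φ i / α)) * ∏ i, Real.exp (-φ i / α) ^ (α * X i - 1) =
        Real.exp (-∑ i, φ i * X i) := by
      simp only [← Real.exp_mul, ← Real.exp_add, ← Real.exp_sum,
        ← Finset.sum_add_distrib, ← Finset.sum_neg_distrib]
      congr 1
      refine Finset.sum_congr rfl fun i _ => ?_
      field_simp
      ring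
    have hαn : α ^ n * α⁻¹ ^ n = 1 := by
      rw [← mul_pow, mul_inv_cancel₀ hα.ne', one_pow]
    simp only [G, hp, hmon]
    rw [← hpow]
    linear_combination (-(Real.exp (-∑ ω ∈ A, c ω * Real.exp (-s φ ω / α)) *
      ((∏ i, Real.exp (-φ i / α)) * ∏ i, Real.exp (-φ i / α) ^ (α * X i - 1)))) * hαn
  obtain ⟨ε, hε, t, ht0, ht⟩ := exists_sub_sign_mem_cone hX
  let K : (Fin n → SignType) → ℝ := fun σ => Real.exp (∑ ω ∈ A, t σ ω ^ 2 / (2 * c ω))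
  have hbound : ∀ α ∈ Set.Ioc (0 : ℝ) 1, ∀ φ,
      ‖G α φ‖ ≤ (∑ σ, K σ) * Real.exp (-(ε * ∑ i, |φ i|)) := by
    rintro α ⟨hα, hα1⟩ φ
    let σ : Fin n → SignType := fun i => SignType.sign (φ i)
    have hX' : ∑ i, φ i * X i = ε * ∑ i, |φ i| + ∑ ω ∈ A, t σ ω * s φ ω := by
      simp only [s, Finset.mul_sum]
      rw [Finset.sum_comm, ← Finset.sum_add_distrib]
      refine Finset.sum_congr rfl fun i _ => ?_
      rw [ht σ i, ← self_mul_sign (φ i), mul_add, Finset.mul_sum]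
      congr 1
      · simp only [σ]; ring
      · exact Finset.sum_congr rfl fun ω _ => by ring
    have hexp : ∑ ω ∈ A, (-(c ω * Real.exp (-s φ ω / α)) - t σ ω * s φ ω) ≤
        ∑ ω ∈ A, t σ ω ^ 2 / (2 * c ω) :=
      Finset.sum_le_sum fun ω hω => neg_mul_exp_sub_mul_le (hc ω hω) (ht0 σ ω) hα hα1
    rw [Finset.sum_sub_distrib, Finset.sum_neg_distrib] at hexp
    have hGK : G α φ ≤ K σ * Real.exp (-(ε * ∑ i, |φ i|)) := by
      simp only [G, K, ← Real.exp_add]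
      exact Real.exp_le_exp.2 (by linarith)
    rw [Real.norm_of_nonneg (mul_nonneg (Real.exp_pos _).le (Real.exp_pos _).le)]
    refine hGK.trans (mul_le_mul_of_nonneg_right ?_ (Real.exp_pos _).le)
    exact Finset.single_le_sum (f := K) (fun τ _ => (Real.exp_pos _).le) (Finset.mem_univ σ)
  have hmeas : MeasurableSet {φ : Fin n → ℝ | ∀ ω ∈ A, 0 ≤ s φ ω} := by
    have : IsClosed {φ : Fin n → ℝ | ∀ ω ∈ A, 0 ≤ s φ ω} := by
      simp only [Set.ofPred_forall]
      exact isClosed_biInter fun ω _ => isClosed_le continuous_const (hs_cont ω)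
    exact this.measurableSet
  have hwalls : ∀ᵐ φ : Fin n → ℝ, ∀ ω ∈ A, ω ≠ 0 → s φ ω ≠ 0 := by
    refine (Finset.eventually_all A).2 fun ω _ => ?_
    by_cases h : ω = 0
    · simp [h]
    · have hw : (fun i => (ω i : ℝ)) ≠ 0 := fun h0 =>
        h (funext fun i => by simpa using congrFun h0 i)
      filter_upwards [ae_sum_mul_ne_zero hw] with φ hφ _ using hφ
  have hlim : ∀ᵐ φ : Fin n → ℝ, Filter.Tendsto (fun α => G α φ) (nhdsWithin 0 (Set.Ioi 0))
      (nhds (Set.indicator {φ : Fin n → ℝ | ∀ ω ∈ A, 0 ≤ s φ ω}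
        (fun φ => Real.exp (-(if (0 : Fin n → ℤ) ∈ A then c 0 else 0)) *
          Real.exp (-∑ i, φ i * X i)) φ)) := by
    filter_upwards [hwalls] with φ hφ
    have := (tendsto_exp_neg_sum (s := s φ) hc (by simp [s]) hφ).mul_const
      (Real.exp (-∑ i, φ i * X i))
    simpa only [Set.indicator_apply, Set.mem_ofPred_eq, ite_mul, zero_mul] using this
  have hdom := tendsto_integral_filter_of_dominated_convergence
    (fun φ : Fin n → ℝ => (∑ σ, K σ) * Real.exp (-(ε * ∑ i, |φ i|)))
    (Filter.Eventually.of_forall fun α => (hG_cont α).aestronglyMeasurable)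
    (Filter.eventually_of_mem (Ioc_mem_nhdsGT one_pos)
      fun α hα => Filter.Eventually.of_forall (hbound α hα))
    ((integrable_exp_neg_mul_sum_abs hε).const_mul _) hlim
  rw [integral_indicator hmeas, integral_const_mul] at hdom
  exact hdom.congr' (Filter.mem_of_superset self_mem_nhdsWithin hsubst)
end

section
/- Let q₁,…,q_e be Laurent polynomials in n variables with positive coefficients and exponent sets A₁,…,A_e ⊂ ℤⁿ, let v₁,…,v_e > 0, set P := Σ_{j=1}^e v_j · conv(A_j), assumed n-dimensional, and let ⊂ ℝ^{e+n} be the Cayley configuration with cone Cone(Â). Let T be a finite collection of subsets σ ⊆ each consisting of n+e linearly independent vectors (write A_σ for the (n+e)×(n+e) matrix whose columns are the elements of σ), such that Cone(Â) = ⋃_{σ∈T} Cone(σ) and for distinct σ, σ′ ∈ T the intersection Cone(σ) ∩ Cone(σ′) has Lebesgue measure zero in ℝ^{e+n} (a triangulation of Cone(Â)). Suppose u lies in the interior of P and X := (v,u) satisfies that every coordinate of A_σ⁻¹X is nonzero for every σ ∈ T. Then n! · vol((P−u)^∘) = (v₁⋯v_e) · Σ_{σ∈T} 1/(|det A_σ|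 · ∏_{i=1}^{n+e} (A_σ⁻¹X)_i), where (P−u)^∘ := {ψ ∈ ℝⁿ : ⟨ψ, p−u⟩ ≥ −1 for all p ∈ P} and vol is Lebesgue measure on ℝⁿ. -/
open MeasureTheory Real Pointwise Matrix

open Classical in
/-- A linear relation between indicators of compact intervals is a relation between the numbers of
nonempty ones. -/
theorem sum_ite_nonempty_eq_zero_of_real {κ : Type*} (s : Finset κ) (c : κ → ℝ) (I : κ → Set ℝ)
    (hc : ∀ i ∈ s, IsCompact (I i)) (hconv : ∀ i ∈ s, Convex ℝ (I i))
    (h : ∀ t, ∑ i ∈ s, (if t ∈ I i then c i else 0) = 0) :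
    ∑ i ∈ s, (if (I i).Nonempty then c i else 0) = 0 := by
  have key : ∀ t : ℝ, ∑ i ∈ s, (if (I i).Nonempty ∧ sSup (I i) = t then c i else 0) = 0 := by
    intro t
    have hev : ∀ᶠ t' in nhdsWithin t (Set.Ioi t), ∀ i ∈ s,
        (if (I i).Nonempty ∧ sSup (I i) = t then c i else 0) =
          (if t ∈ I i then c i else 0) - (if t' ∈ I i then c i else 0) := by
      rw [Filter.eventually_all_finset]
      intro i hi
      by_cases hne : (I i).Nonempty
      · have hb := (hc i hi).sSup_mem hne
        have hub : ∀ x ∈ I i, x ≤ sSup (I i) := fun x hx => le_csSup (hc i hi).bddAbove hx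
        have hoc := (hconv i hi).ordConnected
        by_cases htI : t ∈ I i
        · rcases (hub t htI).lt_or_eq with hlt | heq
          · filter_upwards [Ioo_mem_nhdsGT hlt] with t' ht'
            have : t' ∈ I i := hoc.out htI hb ⟨ht'.1.le, ht'.2.le⟩
            simp [htI, this, hlt.ne']
          · filter_upwards [self_mem_nhdsWithin] with t' ht'
            have : t' ∉ I i := fun hx => absurd (hub t' hx) (by rw [← heq]; exact not_le.2 ht')
            simp [htI, this, hne, heq.symm]
        · have : ∀ᶠ t' in nhdsWithin t (Set.Ioi t), t' ∈ (I i)ᶜ :=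
            nhdsWithin_le_nhds ((hc i hi).isClosed.isOpen_compl.mem_nhds htI)
          filter_upwards [this] with t' ht'
          have hst : sSup (I i) ≠ t := fun hh => htI (hh ▸ hb)
          simp [htI, show t' ∉ I i from ht', hst]
      · rw [Set.not_nonempty_iff_eq_empty] at hne
        simp [hne]
    obtain ⟨t', ht'⟩ := hev.exists
    rw [Finset.sum_congr rfl ht', Finset.sum_sub_distrib, h, h, sub_zero]
  have hsum : ∑ t ∈ s.image fun i => sSup (I i),
      ∑ i ∈ s, (if (I i).Nonempty ∧ sSup (I i) = t then c i else 0) = 0 :=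
    Finset.sum_eq_zero fun t _ => key t
  rw [Finset.sum_comm] at hsum
  refine Eq.trans (Finset.sum_congr rfl fun i hi => ?_) hsum
  by_cases hne : (I i).Nonempty
  · simp only [hne, true_and, Finset.sum_ite_eq]
    rw [if_pos (Finset.mem_image_of_mem _ hi)]
    simp
  · simp [hne]

open Classical in
/-- The Euler characteristic is well defined on linear combinations of indicators of compact convex
sets. -/
theorem sum_ite_nonempty_eq_zero {κ ι : Type*} [Fintype ι] (s : Finset κ) (c : κ → ℝ)
    (K : κ → Set (ι → ℝ))
    (hc : ∀ i ∈ s, IsCompact (K i)) (hconv : ∀ i ∈ s, Convex ℝ (K i))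
    (h : ∀ x, ∑ i ∈ s, (if x ∈ K i then c i else 0) = 0) :
    ∑ i ∈ s, (if (K i).Nonempty then c i else 0) = 0 := by
  have key : ∀ (S : Finset ι) (z : ι → ℝ),
      ∑ i ∈ s, (if (K i ∩ {x | ∀ k ∉ S, x k = z k}).Nonempty then c i else 0) = 0 := by
    intro S
    induction S using Finset.induction_on with
    | empty =>
      intro z
      refine (Finset.sum_congr rfl fun i _ => if_congr ?_ rfl rfl).trans (h z)
      constructor
      · rintro ⟨x, hx, hxz⟩
        rwa [← show x = z from funext fun k => hxz k (by simp)]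
      · exact fun hz => ⟨z, hz, fun _ _ => rfl⟩
    | insert a S ha ih =>
      intro z
      set I : κ → Set ℝ := fun i =>
        (fun x : ι → ℝ => x a) '' (K i ∩ {x | ∀ k ∉ insert a S, x k = z k}) with hI
      have hclosed : IsClosed {x : ι → ℝ | ∀ k ∉ insert a S, x k = z k} := by
        simp only [Set.ofPred_forall]
        exact isClosed_iInter fun k => isClosed_iInter fun _ =>
          isClosed_eq (continuous_apply k) continuous_const
      have hcv : Convex ℝ {x : ι → ℝ | ∀ k ∉ insert a S, x k = z k} := by
        intro x hx y hy p q _ _ hpq k hk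
        simp only [Pi.add_apply, Pi.smul_apply, smul_eq_mul, hx k hk, hy k hk]
        rw [← add_mul, hpq, one_mul]
      have := sum_ite_nonempty_eq_zero_of_real s c I
        (fun i hi => ((hc i hi).inter_right hclosed).image (continuous_apply a))
        (fun i hi => ((hconv i hi).inter hcv).is_linear_image
          (LinearMap.proj (R := ℝ) (φ := fun _ : ι => ℝ) a).isLinear)
        (fun t => by
          refine (Finset.sum_congr rfl fun i _ => if_congr ?_ rfl rfl).trans
            (ih (Function.update z a t))
          constructor
          · rintro ⟨x, ⟨hx, hxz⟩, rfl⟩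
            refine ⟨x, hx, fun k hk => ?_⟩
            by_cases hka : k = a
            · subst hka; simp
            · rw [Function.update_of_ne hka]
              exact hxz k (by simp [hka, hk])
          · rintro ⟨x, hx, hxz⟩
            refine ⟨x, ⟨hx, fun k hk => ?_⟩, ?_⟩
            · rw [Finset.mem_insert, not_or] at hk
              rw [hxz k hk.2, Function.update_of_ne hk.1]
            · simpa using hxz a ha)
      simpa only [hI, Set.image_nonempty] using this
  simpa using key Finset.univ 0

open Classical in
/-- Polarity of closed convex cones respects linear relations between indicator functions. -/
theorem sum_ite_mem_dual_eq_zero {κ ι : Type*} [Fintype ι] (s : Finset κ) (c : κ → ℝ)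
    (K : κ → Set (ι → ℝ)) (hcl : ∀ i ∈ s, IsClosed (K i)) (hconv : ∀ i ∈ s, Convex ℝ (K i))
    (hcone : ∀ i ∈ s, ∀ x ∈ K i, ∀ r : ℝ, 0 ≤ r → r • x ∈ K i) (hzero : ∀ i ∈ s, 0 ∈ K i)
    (h : ∀ x, ∑ i ∈ s, (if x ∈ K i then c i else 0) = 0) (φ : ι → ℝ) :
    ∑ i ∈ s, (if ∀ x ∈ K i, 0 ≤ x ⬝ᵥ φ then c i else 0) = 0 := by
  have hcont : Continuous fun x : ι → ℝ => x ⬝ᵥ φ := by fun_prop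
  have hex : ∀ i, ∃ R : ℝ, i ∈ s → (∃ x ∈ K i, x ⬝ᵥ φ < 0) →
      ∃ x ∈ K i, x ⬝ᵥ φ = -1 ∧ ‖x‖ ≤ R := by
    intro i
    by_cases hi : i ∈ s ∧ ∃ x ∈ K i, x ⬝ᵥ φ < 0
    · obtain ⟨hi, x, hx, hneg⟩ := hi
      refine ⟨‖(-(x ⬝ᵥ φ))⁻¹ • x‖, fun _ _ => ⟨_, hcone i hi x hx (-(x ⬝ᵥ φ))⁻¹
        (inv_nonneg.2 (by linarith)), ?_, le_rfl⟩⟩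
      rw [smul_dotProduct, smul_eq_mul, inv_neg, neg_mul, inv_mul_cancel₀ hneg.ne]
    · exact ⟨0, fun h1 h2 => absurd ⟨h1, h2⟩ hi⟩
  choose R hR using hex
  obtain ⟨B, hB⟩ : ∃ B, ∀ i ∈ s, R i ≤ B := by
    obtain ⟨B, hB⟩ := (s.image R).exists_le
    exact ⟨B, fun i hi => hB _ (Finset.mem_image_of_mem _ hi)⟩
  have hE := sum_ite_nonempty_eq_zero s c
    (fun i => K i ∩ ({x | x ⬝ᵥ φ = -1} ∩ Metric.closedBall 0 B))
    (fun i hi => ((isCompact_closedBall 0 B).inter_left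
      (isClosed_eq hcont continuous_const)).inter_left (hcl i hi))
    (fun i hi => (hconv i hi).inter (Convex.inter (by
      intro x hx y hy p q _ _ hpq
      simp only [Set.mem_ofPred_eq] at hx hy ⊢
      rw [add_dotProduct, smul_dotProduct, smul_dotProduct, hx, hy, smul_eq_mul, smul_eq_mul]
      linarith) (convex_closedBall _ _)))
    (fun x => by
      by_cases hx : x ∈ {x | x ⬝ᵥ φ = -1} ∩ Metric.closedBall 0 B
      · refine Eq.trans (Finset.sum_congr rfl fun i _ => ?_) (h x)
        simp only [Set.mem_inter_iff x (K _), hx, and_true]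
      · exact Finset.sum_eq_zero fun i _ => if_neg fun h' => hx h'.2)
  have hsub := sub_eq_zero.2 ((h 0).trans hE.symm)
  rw [← Finset.sum_sub_distrib] at hsub
  refine Eq.trans (Finset.sum_congr rfl fun i hi => ?_) hsub
  rw [if_pos (hzero i hi)]
  by_cases hd : ∀ x ∈ K i, 0 ≤ x ⬝ᵥ φ
  · rw [if_pos hd, if_neg, sub_zero]
    rintro ⟨x, hx, hx1, -⟩
    have := hd x hx
    rw [show x ⬝ᵥ φ = -1 from hx1] at this
    linarith
  · rw [if_neg hd, if_pos, sub_self]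
    push Not at hd
    obtain ⟨x, hx, hx1, hxR⟩ := hR i hi hd
    exact ⟨x, hx, hx1, by simpa using hxR.trans (hB i hi)⟩

open Classical in
/-- If a closed convex cone `C` is a signed sum of closed convex cones, its dual is the same signed
sum of their duals. -/
theorem sum_ite_mem_dual_eq {κ ι : Type*} [Fintype ι] (s : Finset κ) (c : κ → ℝ)
    (K : κ → Set (ι → ℝ)) (C : Set (ι → ℝ))
    (hcl : ∀ i ∈ s, IsClosed (K i)) (hadd : ∀ i ∈ s, ∀ x ∈ K i, ∀ y ∈ K i, x + y ∈ K i)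
    (hsmul : ∀ i ∈ s, ∀ x ∈ K i, ∀ r : ℝ, 0 ≤ r → r • x ∈ K i) (hzero : ∀ i ∈ s, 0 ∈ K i)
    (hclC : IsClosed C) (haddC : ∀ x ∈ C, ∀ y ∈ C, x + y ∈ C)
    (hsmulC : ∀ x ∈ C, ∀ r : ℝ, 0 ≤ r → r • x ∈ C) (hzeroC : 0 ∈ C)
    (h : ∀ x, ∑ i ∈ s, (if x ∈ K i then c i else 0) = if x ∈ C then 1 else 0) (φ : ι → ℝ) :
    ∑ i ∈ s, (if ∀ x ∈ K i, 0 ≤ x ⬝ᵥ φ then c i else 0) =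
      if ∀ x ∈ C, 0 ≤ x ⬝ᵥ φ then 1 else 0 := by
  have hneg : ∀ p : Prop, (if p then (-1 : ℝ) else 0) = -(if p then 1 else 0) := fun p => by
    split_ifs <;> simp
  have hdual := sum_ite_mem_dual_eq_zero (Finset.insertNone s) (fun i => i.elim (-1) c)
    (fun i => i.elim C K)
    (Finset.forall_mem_insertNone.2 ⟨hclC, hcl⟩)
    (Finset.forall_mem_insertNone.2
      ⟨fun x hx y hy p q hp hq _ => haddC _ (hsmulC x hx p hp) _ (hsmulC y hy q hq),
        fun i hi x hx y hy p q hp hq _ =>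
          hadd i hi _ (hsmul i hi x hx p hp) _ (hsmul i hi y hy q hq)⟩)
    (Finset.forall_mem_insertNone.2 ⟨hsmulC, hsmul⟩)
    (Finset.forall_mem_insertNone.2 ⟨hzeroC, hzero⟩)
    (fun x => by
      rw [Finset.sum_insertNone]
      change (if x ∈ C then (-1 : ℝ) else 0) + ∑ i ∈ s, (if x ∈ K i then c i else 0) = 0
      rw [h, hneg, neg_add_cancel])
    φ
  rw [Finset.sum_insertNone] at hdual
  change (if ∀ x ∈ C, 0 ≤ x ⬝ᵥ φ then (-1 : ℝ) else 0) +
    ∑ i ∈ s, (if ∀ x ∈ K i, 0 ≤ x ⬝ᵥ φ then c i else 0) = 0 at hdual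
  rw [hneg, neg_add_eq_zero] at hdual
  exact hdual.symm

theorem eventually_add_mul_pos_iff {t a : ℝ} (ha : a ≠ 0) :
    ∀ᶠ ε in nhdsWithin (0 : ℝ) (Set.Ioi 0), t + ε * a ≠ 0 ∧
      (0 < t + ε * a ↔ (0 < a → 0 ≤ t) ∧ (a < 0 → 0 < t)) := by
  have hlim : Filter.Tendsto (fun ε : ℝ => t + ε * a) (nhdsWithin 0 (Set.Ioi 0)) (nhds t) := by
    have : Continuous fun ε : ℝ => t + ε * a := by fun_prop
    simpa using (this.tendsto 0).mono_left nhdsWithin_le_nhds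
  rcases lt_trichotomy t 0 with ht | rfl | ht
  · filter_upwards [hlim.eventually_lt_const ht] with ε hε
    refine ⟨hε.ne, iff_of_false hε.not_gt fun h => ?_⟩
    rcases ha.lt_or_gt with h' | h'
    · exact absurd (h.2 h') ht.not_gt
    · exact absurd (h.1 h') ht.not_ge
  · filter_upwards [self_mem_nhdsWithin] with ε hε
    have hε : 0 < ε := hε
    simp only [zero_add, le_refl, implies_true, true_and, lt_irrefl, imp_false, not_lt]
    exact ⟨mul_ne_zero hε.ne' ha, by rw [mul_pos_iff_of_pos_left hε]; exact
      ⟨le_of_lt, fun h => h.lt_of_ne ha.symm⟩⟩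
  · filter_upwards [hlim.eventually_const_lt ht] with ε hε
    exact ⟨hε.ne', iff_of_true hε ⟨fun _ => ht.le, fun _ => ht⟩⟩

open Classical in
/-- If simplicial cones dissect a cone `C`, the half-open cones cut out by a generic direction
`X ∈ C` partition `C`. -/
theorem sum_ite_halfOpen_eq {ι : Type*} [Fintype ι] [DecidableEq ι]
    (T : Finset (Matrix ι ι ℝ)) (C : Set (ι → ℝ)) (hadd : ∀ x ∈ C, ∀ y ∈ C, x + y ∈ C)
    (hsmul : ∀ x ∈ C, ∀ r : ℝ, 0 ≤ r → r • x ∈ C) (hcl : IsClosed C)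
    (hcover : C = ⋃ M ∈ T, {x | ∀ k, 0 ≤ (M⁻¹ *ᵥ x) k})
    (hdisj : ∀ M ∈ T, ∀ M' ∈ T, M ≠ M' →
      volume ({x : ι → ℝ | ∀ k, 0 ≤ (M⁻¹ *ᵥ x) k} ∩ {x | ∀ k, 0 ≤ (M'⁻¹ *ᵥ x) k}) = 0)
    (X : ι → ℝ) (hX : X ∈ C) (hXT : ∀ M ∈ T, ∀ k, (M⁻¹ *ᵥ X) k ≠ 0) (x : ι → ℝ) :
    ∑ M ∈ T, (if ∀ k, (0 < (M⁻¹ *ᵥ X) k → 0 ≤ (M⁻¹ *ᵥ x) k) ∧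
        ((M⁻¹ *ᵥ X) k < 0 → 0 < (M⁻¹ *ᵥ x) k) then (1 : ℝ) else 0)
      = if x ∈ C then 1 else 0 := by
  have h1 : ∀ᶠ ε in nhdsWithin (0 : ℝ) (Set.Ioi 0), ∀ M ∈ T, ∀ k,
      (M⁻¹ *ᵥ x) k + ε * (M⁻¹ *ᵥ X) k ≠ 0 ∧
      (0 < (M⁻¹ *ᵥ x) k + ε * (M⁻¹ *ᵥ X) k ↔ (0 < (M⁻¹ *ᵥ X) k → 0 ≤ (M⁻¹ *ᵥ x) k) ∧
        ((M⁻¹ *ᵥ X) k < 0 → 0 < (M⁻¹ *ᵥ x) k)) := by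
    rw [Filter.eventually_all_finset]
    intro M hM
    rw [Filter.eventually_all]
    exact fun k => eventually_add_mul_pos_iff (hXT M hM k)
  have h2 : ∀ᶠ ε in nhdsWithin (0 : ℝ) (Set.Ioi 0), x + ε • X ∈ C ↔ x ∈ C := by
    by_cases hx : x ∈ C
    · filter_upwards [self_mem_nhdsWithin] with ε hε
      exact iff_of_true (hadd _ hx _ (hsmul _ hX _ (le_of_lt hε))) hx
    · have hlim : Filter.Tendsto (fun ε : ℝ => x + ε • X) (nhdsWithin 0 (Set.Ioi 0)) (nhds x) := by
        have : Continuous fun ε : ℝ => x + ε • X := by fun_prop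
        simpa using (this.tendsto 0).mono_left nhdsWithin_le_nhds
      filter_upwards [hlim.eventually (hcl.isOpen_compl.mem_nhds hx)] with ε hε
      exact iff_of_false hε hx
  obtain ⟨ε, h1, h2⟩ := (h1.and h2).exists
  set z := x + ε • X with hz
  have hzk : ∀ M : Matrix ι ι ℝ, ∀ k,
      (M⁻¹ *ᵥ x) k + ε * (M⁻¹ *ᵥ X) k = (M⁻¹ *ᵥ z) k := by
    intro M k
    simp [hz, mulVec_add, mulVec_smul]
  simp only [hzk] at h1
  have h3 : ∀ M ∈ T, (∀ k, (0 < (M⁻¹ *ᵥ X) k → 0 ≤ (M⁻¹ *ᵥ x) k) ∧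
        ((M⁻¹ *ᵥ X) k < 0 → 0 < (M⁻¹ *ᵥ x) k)) ↔ ∀ k, 0 ≤ (M⁻¹ *ᵥ z) k := fun M hM =>
    forall_congr' fun k => by
      rw [← (h1 M hM k).2]
      exact ⟨le_of_lt, fun h => h.lt_of_ne (h1 M hM k).1.symm⟩
  rw [Finset.sum_congr rfl fun M hM => if_congr (h3 M hM) rfl rfl]
  by_cases hx : x ∈ C
  · rw [if_pos hx]
    have hzC := h2.2 hx
    rw [hcover] at hzC
    simp only [Set.mem_iUnion, exists_prop] at hzC
    obtain ⟨M, hM, hzM⟩ := hzC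
    have hzM : ∀ k, 0 ≤ (M⁻¹ *ᵥ z) k := hzM
    rw [Finset.sum_eq_single_of_mem M hM, if_pos hzM]
    intro M' hM' hne
    refine if_neg fun hzM' => ?_
    have hopen : ∀ N : Matrix ι ι ℝ, IsOpen {y : ι → ℝ | ∀ k, 0 < (N⁻¹ *ᵥ y) k} := by
      intro N
      simp only [Set.ofPred_forall]
      exact isOpen_iInter_of_finite fun k =>
        isOpen_lt continuous_const (by fun_prop)
    have hpos := ((hopen M).inter (hopen M')).measure_pos (volume : Measure (ι → ℝ))
      ⟨z, fun k => (hzM k).lt_of_ne (h1 M hM k).1.symm,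
        fun k => (hzM' k).lt_of_ne (h1 M' hM' k).1.symm⟩
    refine (hpos.trans_le (measure_mono ?_)).ne' (hdisj M hM M' hM' hne.symm)
    exact Set.inter_subset_inter (fun y hy k => (hy k).le) fun y hy k => (hy k).le
  · rw [if_neg hx]
    refine Finset.sum_eq_zero fun M hM => if_neg fun hzM => hx (h2.1 ?_)
    rw [hcover]
    simp only [Set.mem_iUnion, exists_prop]
    exact ⟨M, hM, hzM⟩

open Classical in
/-- The indicator of a half-open orthant as a signed sum of indicators of closed cones. -/
theorem ite_halfOpen_eq_sum {ι : Type*} [Fintype ι] [DecidableEq ι] (a t : ι → ℝ) :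
    (if ∀ k, (0 < a k → 0 ≤ t k) ∧ (a k < 0 → 0 < t k) then (1 : ℝ) else 0) =
      ∑ J ∈ (Finset.univ.filter fun k => a k < 0).powerset,
        if (∀ k, 0 < a k → 0 ≤ t k) ∧ ∀ k ∈ J, t k ≤ 0 then (-1) ^ J.card else 0 := by
  by_cases hp : ∀ k, 0 < a k → 0 ≤ t k
  · have h : ∀ J : Finset ι, (if (∀ k, 0 < a k → 0 ≤ t k) ∧ ∀ k ∈ J, t k ≤ 0
        then (-1 : ℝ) ^ J.card else 0) = ∏ k ∈ J, if t k ≤ 0 then -1 else 0 := by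
      intro J
      rw [Finset.prod_ite_zero, Finset.prod_const]
      by_cases hJ : ∀ k ∈ J, t k ≤ 0
      · rw [if_pos ⟨hp, hJ⟩, if_pos hJ]
      · rw [if_neg fun h => hJ h.2, if_neg hJ]
    simp only [h]
    rw [← Finset.prod_one_add]
    have h' : ∀ k, (1 : ℝ) + (if t k ≤ 0 then -1 else 0) = if 0 < t k then 1 else 0 := by
      intro k
      by_cases hk : t k ≤ 0
      · simp [hk, hk.not_gt]
      · simp [hk, not_le.1 hk]
    rw [Finset.prod_congr rfl fun k _ => h' k]
    simp only [Finset.prod_ite_zero, Finset.prod_const_one, Finset.mem_filter,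
      Finset.mem_univ, true_and]
    exact if_congr ⟨fun h k => (h k).2, fun h k => ⟨hp k, h k⟩⟩ rfl rfl
  · rw [if_neg fun h => hp fun k => (h k).1]
    exact (Finset.sum_eq_zero fun J _ => if_neg fun h => hp h.1).symm

open Classical in
/-- Filliman duality, pointwise at a generic covector: the dual of a dissected cone is the signed
sum of the duals of the simplicial cones flipped so as to contain a generic vector `X`. -/
theorem ite_mem_dual_eq_sum_prod {ι : Type*} [Fintype ι] [DecidableEq ι]
    (T : Finset (Matrix ι ι ℝ)) (hT : ∀ M ∈ T, M.det ≠ 0) (C : Set (ι → ℝ))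
    (hadd : ∀ x ∈ C, ∀ y ∈ C, x + y ∈ C)
    (hsmul : ∀ x ∈ C, ∀ r : ℝ, 0 ≤ r → r • x ∈ C)
    (hcover : C = ⋃ M ∈ T, {x | ∀ k, 0 ≤ (M⁻¹ *ᵥ x) k})
    (hdisj : ∀ M ∈ T, ∀ M' ∈ T, M ≠ M' →
      volume ({x : ι → ℝ | ∀ k, 0 ≤ (M⁻¹ *ᵥ x) k} ∩ {x | ∀ k, 0 ≤ (M'⁻¹ *ᵥ x) k}) = 0)
    (X : ι → ℝ) (hX : X ∈ C) (hXT : ∀ M ∈ T, ∀ k, (M⁻¹ *ᵥ X) k ≠ 0) (φ : ι → ℝ)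
    (hφ : ∀ M ∈ T, ∀ k, (φ ᵥ* M) k ≠ 0) :
    (if ∀ x ∈ C, 0 ≤ x ⬝ᵥ φ then (1 : ℝ) else 0) =
      ∑ M ∈ T, ∏ k, if 0 ≤ (M⁻¹ *ᵥ X) k * (φ ᵥ* M) k then Real.sign ((M⁻¹ *ᵥ X) k) else 0 := by
  have hclT : ∀ M : Matrix ι ι ℝ, IsClosed {x : ι → ℝ | ∀ k, 0 ≤ (M⁻¹ *ᵥ x) k} := by
    intro M
    simp only [Set.ofPred_forall]
    exact isClosed_iInter fun k => isClosed_le continuous_const (by fun_prop)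
  have hcl : IsClosed C := by
    rw [hcover]
    exact T.finite_toSet.isClosed_biUnion fun M _ => hclT M
  have hclD : ∀ (M : Matrix ι ι ℝ) (J : Finset ι),
      IsClosed {x | (∀ k, 0 < (M⁻¹ *ᵥ X) k → 0 ≤ (M⁻¹ *ᵥ x) k) ∧ ∀ k ∈ J, (M⁻¹ *ᵥ x) k ≤ 0} := by
    intro M J
    simp only [Set.ofPred_and, Set.ofPred_forall]
    exact (isClosed_iInter fun k => isClosed_iInter fun _ =>
      isClosed_le continuous_const (by fun_prop)).inter
      (isClosed_iInter fun k => isClosed_iInter fun _ =>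
        isClosed_le (by fun_prop) continuous_const)
  have hzero : (0 : ι → ℝ) ∈ C := by simpa using hsmul X hX 0 le_rfl
  set N : Matrix ι ι ℝ → Finset ι := fun M => Finset.univ.filter fun k => (M⁻¹ *ᵥ X) k < 0 with hN
  obtain ⟨D, hD⟩ : ∃ D : Matrix ι ι ℝ → Finset ι → Set (ι → ℝ), ∀ M J, D M J =
      {x | (∀ k, 0 < (M⁻¹ *ᵥ X) k → 0 ≤ (M⁻¹ *ᵥ x) k) ∧ ∀ k ∈ J, (M⁻¹ *ᵥ x) k ≤ 0} :=
    ⟨_, fun _ _ => rfl⟩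
  rw [← sum_ite_mem_dual_eq (T.sigma fun M => (N M).powerset) (fun p => (-1) ^ p.2.card)
    (fun p => D p.1 p.2) C (fun p _ => hD p.1 p.2 ▸ hclD p.1 p.2)
    (fun p _ x hx y hy => by
      rw [hD] at hx hy ⊢
      simp only [Set.mem_ofPred_eq, mulVec_add, Pi.add_apply] at hx hy ⊢
      exact ⟨fun k hk => add_nonneg (hx.1 k hk) (hy.1 k hk),
        fun k hk => add_nonpos (hx.2 k hk) (hy.2 k hk)⟩)
    (fun p _ x hx r hr => by
      rw [hD] at hx ⊢
      simp only [Set.mem_ofPred_eq, mulVec_smul, Pi.smul_apply, smul_eq_mul] at hx ⊢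
      exact ⟨fun k hk => mul_nonneg hr (hx.1 k hk),
        fun k hk => mul_nonpos_of_nonneg_of_nonpos hr (hx.2 k hk)⟩)
    (fun p _ => by simp [hD]) hcl hadd hsmul hzero
    (fun x => by
      rw [← sum_ite_halfOpen_eq T C hadd hsmul hcl hcover hdisj X hX hXT x, Finset.sum_sigma]
      refine Finset.sum_congr rfl fun M _ => ?_
      rw [ite_halfOpen_eq_sum]
      exact Finset.sum_congr rfl fun J _ => if_congr (by rw [hD]; rfl) rfl rfl) φ,
    Finset.sum_sigma]
  refine Finset.sum_congr rfl fun M hM => ?_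
  set a := M⁻¹ *ᵥ X with ha
  set y := φ ᵥ* M with hy
  have hinv : ∀ t : ι → ℝ, M⁻¹ *ᵥ (M *ᵥ t) = t := fun t => by
    rw [mulVec_mulVec, nonsing_inv_mul _ (hT M hM).isUnit, one_mulVec]
  have hinv' : ∀ x : ι → ℝ, x ⬝ᵥ φ = (M⁻¹ *ᵥ x) ⬝ᵥ y := fun x => by
    rw [hy, dotProduct_comm _ (φ ᵥ* M), ← dotProduct_mulVec, mulVec_mulVec,
      mul_nonsing_inv _ (hT M hM).isUnit, one_mulVec, dotProduct_comm]
  rw [Finset.sum_eq_single_of_mem (N M) (Finset.mem_powerset_self _)]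
  · rw [Finset.prod_ite_zero]
    have hsign : ∏ k, Real.sign (a k) = (-1) ^ (N M).card := by
      rw [← Finset.prod_const, hN, Finset.prod_filter]
      refine Finset.prod_congr rfl fun k _ => ?_
      rcases (hXT M hM k).lt_or_gt with h | h
      · rw [Real.sign_of_neg h, if_pos h]
      · rw [Real.sign_of_pos h, if_neg h.not_gt]
    rw [hsign]
    have hiff : (∀ x ∈ D M (N M), 0 ≤ x ⬝ᵥ φ) ↔ ∀ k ∈ Finset.univ, 0 ≤ a k * y k := by
      refine Iff.intro (fun h k _ => ?_) fun h x hx => ?_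
      · have := h (M *ᵥ Pi.single k (a k)) (by
          rw [hD]
          simp only [Set.mem_ofPred_eq, hinv, hN, Finset.mem_filter, Finset.mem_univ, true_and]
          refine ⟨fun j hj => ?_, fun j hj => ?_⟩
          · by_cases hjk : j = k
            · subst hjk; simpa using hj.le
            · simp [hjk]
          · by_cases hjk : j = k
            · subst hjk; simpa using hj.le
            · simp [hjk])
        rwa [hinv', hinv, single_dotProduct] at this
      · rw [hD] at hx
        rw [hinv']
        refine Finset.sum_nonneg fun k _ => ?_
        have hk := h k (Finset.mem_univ k)
        rcases (hXT M hM k).lt_or_gt with h' | h'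
        · exact mul_nonneg_of_nonpos_of_nonpos (hx.2 k (by simpa [hN] using h'))
            (nonpos_of_mul_nonneg_right hk h')
        · exact mul_nonneg (hx.1 k h') (nonneg_of_mul_nonneg_right hk h')
    by_cases h : ∀ k ∈ Finset.univ, 0 ≤ a k * y k
    · rw [if_pos (hiff.2 h), if_pos h]
    · rw [if_neg (hiff.not.2 h), if_neg h]
  · intro J hJ hne
    refine if_neg fun h => ?_
    obtain ⟨k, hkN, hkJ⟩ := Finset.exists_of_ssubset
      ((Finset.mem_powerset.1 hJ).ssubset_of_ne hne)
    have hk : a k < 0 := by simpa [hN] using hkN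
    have := h (M *ᵥ Pi.single k (-y k)) (by
      rw [hD]
      simp only [Set.mem_ofPred_eq, hinv]
      refine ⟨fun j hj => ?_, fun j hj => ?_⟩
      · have hjk : j ≠ k := by rintro rfl; exact hk.not_gt hj
        simp [hjk]
      · have hjk : j ≠ k := by rintro rfl; exact hkJ hj
        simp [hjk])
    rw [hinv', hinv, single_dotProduct] at this
    have hyk : y k ≠ 0 := hφ M hM k
    nlinarith [mul_self_pos.2 hyk]

theorem integrable_sign_exp {a : ℝ} (ha : a ≠ 0) :
    Integrable (fun y => if 0 ≤ a * y then Real.sign a * Real.exp (-(a * y)) else 0) ∧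
      ∫ y, (if 0 ≤ a * y then Real.sign a * Real.exp (-(a * y)) else 0) = a⁻¹ := by
  set g : ℝ → ℝ := (Set.Ici 0).indicator fun z => Real.sign a * Real.exp (-z) with hg
  have hgi : Integrable g := by
    rw [hg, integrable_indicator_iff measurableSet_Ici, integrableOn_Ici_iff_integrableOn_Ioi]
    exact (integrableOn_exp_neg_Ioi 0).const_mul _
  have hfun : (fun y => if 0 ≤ a * y then Real.sign a * Real.exp (-(a * y)) else 0) =
      fun y => g (a * y) := by
    ext y
    simp [hg, Set.indicator_apply]
  rw [hfun]
  refine ⟨hgi.comp_mul_left' ha, ?_⟩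
  rw [Measure.integral_comp_mul_left, hg, integral_indicator measurableSet_Ici,
    integral_Ici_eq_integral_Ioi, integral_const_mul, integral_exp_neg_Ioi_zero, smul_eq_mul]
  rcases ha.lt_or_gt with h | h
  · rw [Real.sign_of_neg h, abs_of_neg (inv_lt_zero.2 h)]; ring
  · rw [Real.sign_of_pos h, abs_of_pos (inv_pos.2 h)]; ring

theorem integrable_comp_vecMul {ι : Type*} [Fintype ι] [DecidableEq ι] {M : Matrix ι ι ℝ}
    (hM : M.det ≠ 0) {f : (ι → ℝ) → ℝ} (hf : Integrable f) :
    Integrable (fun φ => f (φ ᵥ* M)) ∧ ∫ φ, f (φ ᵥ* M) = |M.det|⁻¹ * ∫ y, f y := by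
  have hMt : Mᵀ.det ≠ 0 := by rwa [det_transpose]
  have hmap := Real.map_matrix_volume_pi_eq_smul_volume_pi hMt
  have hfun : (fun φ => f (φ ᵥ* M)) = fun φ => f (toLin' Mᵀ φ) := by
    ext φ
    rw [toLin'_apply, mulVec_transpose]
  have hmeas : Measurable (toLin' Mᵀ) :=
    (LinearMap.continuous_of_finiteDimensional _).measurable
  have hf' : Integrable f (Measure.map (toLin' Mᵀ) volume) := by
    rw [hmap]
    exact hf.smul_measure ENNReal.ofReal_ne_top
  rw [hfun]
  refine ⟨hf'.comp_measurable hmeas, ?_⟩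
  rw [← integral_map hmeas.aemeasurable hf'.aestronglyMeasurable, hmap, integral_smul_measure,
    ENNReal.toReal_ofReal (abs_nonneg _), det_transpose, abs_inv, smul_eq_mul]

open Classical in
/-- Filliman duality for the exponential integral over the dual of a dissected cone. -/
theorem integral_dual_exp_eq_sum {ι : Type*} [Fintype ι] [DecidableEq ι]
    (T : Finset (Matrix ι ι ℝ)) (hT : ∀ M ∈ T, M.det ≠ 0) (C : Set (ι → ℝ))
    (hadd : ∀ x ∈ C, ∀ y ∈ C, x + y ∈ C)
    (hsmul : ∀ x ∈ C, ∀ r : ℝ, 0 ≤ r → r • x ∈ C)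
    (hcover : C = ⋃ M ∈ T, {x | ∀ k, 0 ≤ (M⁻¹ *ᵥ x) k})
    (hdisj : ∀ M ∈ T, ∀ M' ∈ T, M ≠ M' →
      volume ({x : ι → ℝ | ∀ k, 0 ≤ (M⁻¹ *ᵥ x) k} ∩ {x | ∀ k, 0 ≤ (M'⁻¹ *ᵥ x) k}) = 0)
    (X : ι → ℝ) (hX : X ∈ C) (hXT : ∀ M ∈ T, ∀ k, (M⁻¹ *ᵥ X) k ≠ 0) :
    Integrable (fun φ => if ∀ x ∈ C, 0 ≤ x ⬝ᵥ φ then Real.exp (-(X ⬝ᵥ φ)) else 0) ∧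
    ∫ φ, (if ∀ x ∈ C, 0 ≤ x ⬝ᵥ φ then Real.exp (-(X ⬝ᵥ φ)) else 0) =
      ∑ M ∈ T, 1 / (|M.det| * ∏ k, (M⁻¹ *ᵥ X) k) := by
  set f : Matrix ι ι ℝ → (ι → ℝ) → ℝ := fun M y => ∏ k,
    if 0 ≤ (M⁻¹ *ᵥ X) k * y k then
      Real.sign ((M⁻¹ *ᵥ X) k) * Real.exp (-((M⁻¹ *ᵥ X) k * y k)) else 0 with hf
  have hfi : ∀ M ∈ T, Integrable (f M) := fun M hM =>
    Integrable.fintype_prod fun k => (integrable_sign_exp (hXT M hM k)).1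
  have hae : (fun φ => if ∀ x ∈ C, 0 ≤ x ⬝ᵥ φ then Real.exp (-(X ⬝ᵥ φ)) else 0)
      =ᵐ[volume] fun φ => ∑ M ∈ T, f M (φ ᵥ* M) := by
    have hgen : ∀ᵐ φ : ι → ℝ, ∀ M ∈ T, ∀ k, (φ ᵥ* M) k ≠ 0 := by
      rw [Filter.eventually_all_finset]
      intro M hM
      rw [ae_all_iff]
      intro k
      have hk : (LinearMap.proj k ∘ₗ M.vecMulLinear : (ι → ℝ) →ₗ[ℝ] ℝ).ker ≠ ⊤ := by
        intro h
        rw [LinearMap.ker_eq_top] at h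
        have := LinearMap.congr_fun h (Pi.single k 1 ᵥ* M⁻¹)
        change ((Pi.single k 1 ᵥ* M⁻¹) ᵥ* M) k = 0 at this
        rw [vecMul_vecMul, nonsing_inv_mul _ (hT M hM).isUnit, vecMul_one] at this
        simp at this
      have := Measure.addHaar_submodule volume _ hk
      filter_upwards [measure_eq_zero_iff_ae_notMem.1 this] with φ hφ h0
      exact hφ h0
    filter_upwards [hgen] with φ hφ
    have hpt := ite_mem_dual_eq_sum_prod T hT C hadd hsmul hcover hdisj X hX hXT φ hφ
    have hexp : ∀ M ∈ T, f M (φ ᵥ* M) = (∏ k, if 0 ≤ (M⁻¹ *ᵥ X) k * (φ ᵥ* M) k then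
        Real.sign ((M⁻¹ *ᵥ X) k) else 0) * Real.exp (-(X ⬝ᵥ φ)) := by
      intro M hM
      have hdot : X ⬝ᵥ φ = ∑ k, (M⁻¹ *ᵥ X) k * (φ ᵥ* M) k := by
        change _ = (M⁻¹ *ᵥ X) ⬝ᵥ (φ ᵥ* M)
        rw [dotProduct_comm _ (φ ᵥ* M), ← dotProduct_mulVec, mulVec_mulVec,
          mul_nonsing_inv _ (hT M hM).isUnit, one_mulVec, dotProduct_comm]
      rw [hdot, ← Finset.sum_neg_distrib, Real.exp_sum, ← Finset.prod_mul_distrib]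
      refine Finset.prod_congr rfl fun k _ => ?_
      rw [ite_mul, zero_mul]
    rw [Finset.sum_congr rfl hexp, ← Finset.sum_mul, ← hpt, ite_mul, one_mul, zero_mul]
  have hint : ∀ M ∈ T, Integrable (fun φ => f M (φ ᵥ* M)) := fun M hM =>
    (integrable_comp_vecMul (hT M hM) (hfi M hM)).1
  refine ⟨(integrable_finsetSum T hint).congr hae.symm, ?_⟩
  rw [integral_congr_ae hae, integral_finsetSum T hint]
  refine Finset.sum_congr rfl fun M hM => ?_
  rw [(integrable_comp_vecMul (hT M hM) (hfi M hM)).2, hf,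
    integral_fintype_prod_volume_eq_prod fun k y => if 0 ≤ (M⁻¹ *ᵥ X) k * y then
      Real.sign ((M⁻¹ *ᵥ X) k) * Real.exp (-((M⁻¹ *ᵥ X) k * y)) else 0,
    Finset.prod_congr rfl fun k _ => (integrable_sign_exp (hXT M hM k)).2, Finset.prod_inv_distrib,
    one_div, mul_inv]

/-- The integral of `exp (-g)` for a positively homogeneous `g` computes the volume of `{g ≤ 1}`. -/
theorem lintegral_exp_neg_eq_factorial_mul {n : ℕ} {g : (Fin n → ℝ) → ℝ} (hgm : Measurable g)
    (hg0 : ∀ ψ, 0 ≤ g ψ) (hgs : ∀ r : ℝ, 0 < r → ∀ ψ, g (r • ψ) = r * g ψ) :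
    ∫⁻ ψ, ENNReal.ofReal (Real.exp (-g ψ)) =
      ENNReal.ofReal n.factorial * volume {ψ | g ψ ≤ 1} := by
  have htail : ∀ ψ, ENNReal.ofReal (Real.exp (-g ψ)) =
      ∫⁻ s in Set.Ioi (0 : ℝ), (Set.Ici (g ψ)).indicator
        (fun s => ENNReal.ofReal (Real.exp (-s))) s := by
    intro ψ
    have hset : (Set.Ici (g ψ) ∩ Set.Ioi 0 : Set ℝ) =ᵐ[volume] Set.Ioi (g ψ) := by
      have h1 : (Set.Ici (g ψ) : Set ℝ) =ᵐ[volume] Set.Ioi (g ψ) := Ioi_ae_eq_Ici.symm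
      have h2 := h1.inter (Filter.EventuallyEq.refl (ae volume) (Set.Ioi (0 : ℝ)))
      refine h2.trans ?_
      exact (Set.inter_eq_left.2 (Set.Ioi_subset_Ioi (hg0 ψ))).eventuallyEq
    rw [setLIntegral_indicator measurableSet_Ici, setLIntegral_congr hset,
      ← ofReal_integral_eq_lintegral_ofReal (integrableOn_exp_neg_Ioi _)
        (Filter.Eventually.of_forall fun s => (Real.exp_pos _).le), integral_exp_neg_Ioi]
  have hlevel : ∀ s ∈ Set.Ioi (0 : ℝ), volume {ψ | g ψ ≤ s} =
      ENNReal.ofReal (s ^ n) * volume {ψ | g ψ ≤ 1} := by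
    intro s hs
    have hs : 0 < s := hs
    have : {ψ | g ψ ≤ s} = s • {ψ | g ψ ≤ 1} := by
      ext ψ
      rw [Set.mem_smul_set_iff_inv_smul_mem₀ hs.ne', Set.mem_ofPred_eq, Set.mem_ofPred_eq,
        hgs _ (inv_pos.2 hs), inv_mul_le_one₀ hs]
    rw [this, Measure.addHaar_smul, Module.finrank_fin_fun, abs_of_pos (pow_pos hs n)]
  have hmeas : Measurable (Function.uncurry fun (ψ : Fin n → ℝ) (s : ℝ) =>
      (Set.Ici (g ψ)).indicator (fun s => ENNReal.ofReal (Real.exp (-s))) s) := by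
    have hS : MeasurableSet {p : (Fin n → ℝ) × ℝ | g p.1 ≤ p.2} :=
      measurableSet_le (hgm.comp measurable_fst) measurable_snd
    have hF : Measurable fun p : (Fin n → ℝ) × ℝ => ENNReal.ofReal (Real.exp (-p.2)) := by
      fun_prop
    exact hF.indicator hS
  simp_rw [htail]
  rw [lintegral_lintegral_swap hmeas.aemeasurable]
  have hinner : ∀ s ∈ Set.Ioi (0 : ℝ), ∫⁻ ψ : Fin n → ℝ,
      (Set.Ici (g ψ)).indicator (fun s => ENNReal.ofReal (Real.exp (-s))) s =
      ENNReal.ofReal (Real.exp (-s) * s ^ n) * volume {ψ | g ψ ≤ 1} := by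
    intro s hs
    have : (fun ψ : Fin n → ℝ =>
        (Set.Ici (g ψ)).indicator (fun s => ENNReal.ofReal (Real.exp (-s))) s) =
        {ψ | g ψ ≤ s}.indicator fun _ => ENNReal.ofReal (Real.exp (-s)) := rfl
    rw [this, lintegral_indicator_const (measurableSet_le hgm measurable_const), hlevel s hs,
      ← mul_assoc, ← ENNReal.ofReal_mul (Real.exp_pos _).le]
  have hΓ := Real.Gamma_eq_integral (s := n + 1) (by positivity)
  have hΓi := Real.GammaIntegral_convergent (s := n + 1) (by positivity)
  simp only [add_sub_cancel_right, Real.rpow_natCast, Real.Gamma_nat_eq_factorial] at hΓ hΓi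
  rw [setLIntegral_congr_fun measurableSet_Ioi hinner, lintegral_mul_const _ (by fun_prop), hΓ,
    ofReal_integral_eq_lintegral_ofReal hΓi]
  filter_upwards [self_mem_ae_restrict measurableSet_Ioi] with s hs
  exact mul_nonneg (Real.exp_pos _).le (pow_nonneg (le_of_lt hs) n)

theorem measurePreserving_fin_append (e n : ℕ) :
    MeasurePreserving (fun p : (Fin e → ℝ) × (Fin n → ℝ) => Fin.append p.1 p.2) := by
  have h := (volume_measurePreserving_piCongrLeft (fun _ : Fin (e + n) => ℝ)
    finSumFinEquiv).comp (volume_measurePreserving_sumPiEquivProdPi_symm fun _ : Fin e ⊕ Fin n => ℝ)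
  have heq : (fun p : (Fin e → ℝ) × (Fin n → ℝ) => Fin.append p.1 p.2) =
      MeasurableEquiv.piCongrLeft (fun _ : Fin (e + n) => ℝ) finSumFinEquiv ∘
        (MeasurableEquiv.sumPiEquivProdPi fun _ : Fin e ⊕ Fin n => ℝ).symm := by
    funext p
    funext i
    obtain ⟨i, rfl⟩ := finSumFinEquiv.surjective i
    rw [Function.comp_apply, MeasurableEquiv.coe_piCongrLeft, Equiv.piCongrLeft_apply_apply]
    rcases i with i | i <;> simp [MeasurableEquiv.coe_sumPiEquivProdPi_symm]
  rw [heq]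
  exact h

theorem integral_eq_integral_integral_append {e n : ℕ} {F : (Fin (e + n) → ℝ) → ℝ}
    (hF : Integrable F) : ∫ φ, F φ = ∫ ψ : Fin n → ℝ, ∫ h : Fin e → ℝ, F (Fin.append h ψ) := by
  have hmp := measurePreserving_fin_append e n
  have hemb : MeasurableEmbedding fun p : (Fin e → ℝ) × (Fin n → ℝ) => Fin.append p.1 p.2 :=
    (Fin.appendHomeomorph e n).measurableEmbedding
  rw [← hmp.integral_comp hemb]
  exact integral_prod_symm _ ((hmp.integrable_comp_emb hemb).2 hF)

open Classical in
theorem integral_ite_exp_eq_prod {e : ℕ} {v : Fin e → ℝ} (hv : ∀ j, 0 < v j) (m : Fin e → ℝ) :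
    ∫ h : Fin e → ℝ, (if ∀ j, 0 ≤ h j + m j then Real.exp (-∑ j, v j * h j) else 0) =
      (∏ j, v j)⁻¹ * Real.exp (∑ j, v j * m j) := by
  have hfun : (fun h : Fin e → ℝ => if ∀ j, 0 ≤ h j + m j then
      Real.exp (-∑ j, v j * h j) else 0) = fun h => ∏ j,
      (Set.Ici (-m j)).indicator (fun y => Real.exp (-v j * y)) (h j) := by
    ext h
    simp only [Set.indicator_apply, Set.mem_Ici, neg_le_iff_add_nonneg, Finset.prod_ite_zero,
      Finset.mem_univ, true_imp_iff, ← Real.exp_sum, neg_mul, Finset.sum_neg_distrib]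
  rw [hfun, integral_fintype_prod_volume_eq_prod fun j y =>
    (Set.Ici (-m j)).indicator (fun y => Real.exp (-v j * y)) y, Real.exp_sum,
    ← Finset.prod_inv_distrib, ← Finset.prod_mul_distrib]
  refine Finset.prod_congr rfl fun j _ => ?_
  rw [integral_indicator measurableSet_Ici, integral_Ici_eq_integral_Ioi,
    integral_exp_mul_Ioi (neg_lt_zero.2 (hv j)), neg_mul_neg, neg_div_neg_eq, div_eq_inv_mul]

theorem isLeast_dotProduct_sum_smul_convexHull {ι κ : Type*} [Fintype ι] [Fintype κ]
    {S : ι → Set (κ → ℝ)} {v m : ι → ℝ} {ψ : κ → ℝ} (hv : ∀ j, 0 ≤ v j)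
    (hm : ∀ j, IsLeast ((fun x => x ⬝ᵥ ψ) '' S j) (m j)) :
    IsLeast ((fun x => x ⬝ᵥ ψ) '' ∑ j, v j • convexHull ℝ (S j)) (∑ j, v j * m j) := by
  constructor
  · choose x hxS hx using fun j => (hm j).1
    refine ⟨∑ j, v j • x j, (Set.mem_fintype_sum _ _).2
      ⟨_, fun j => Set.smul_mem_smul_set (subset_convexHull ℝ _ (hxS j)), rfl⟩, ?_⟩
    simp only [sum_dotProduct, smul_dotProduct, smul_eq_mul]
    exact Finset.sum_congr rfl fun j _ => congrArg _ (hx j)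
  · rintro _ ⟨p, hp, rfl⟩
    obtain ⟨c, hc, rfl⟩ := (Set.mem_fintype_sum _ _).1 hp
    simp only [sum_dotProduct]
    refine Finset.sum_le_sum fun j _ => ?_
    obtain ⟨x, hx, hxc⟩ := hc j
    have hle : convexHull ℝ (S j) ⊆ {x | m j ≤ x ⬝ᵥ ψ} :=
      convexHull_min (fun x hx => (hm j).2 ⟨x, hx, rfl⟩)
        (convex_halfSpace_ge ⟨fun x y => add_dotProduct x y ψ, fun r x => smul_dotProduct r x ψ⟩ _)
    rw [← hxc]
    change _ ≤ (v j • x) ⬝ᵥ ψ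
    rw [smul_dotProduct, smul_eq_mul]
    exact mul_le_mul_of_nonneg_left (hle hx) (hv j)

theorem append_mem_cayley_cone {n e : ℕ} {A : Fin e → Finset (Fin n → ℤ)} {v : Fin e → ℝ}
    (hv : ∀ j, 0 ≤ v j) {u : Fin n → ℝ}
    (hu : u ∈ ∑ j, v j •
        convexHull ℝ ((fun ω : Fin n → ℤ => fun i => (ω i : ℝ)) '' ↑(A j))) :
    ∃ t : Fin e → (Fin n → ℤ) → ℝ, (∀ j ω, 0 ≤ t j ω) ∧
      Fin.append v u = ∑ j, ∑ ω ∈ A j,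
        t j ω • Fin.append (Pi.single j (1 : ℝ)) (fun i => (ω i : ℝ)) := by
  classical
  set f : (Fin n → ℤ) → Fin n → ℝ := fun ω i => (ω i : ℝ) with hf
  have hfinj : Function.Injective f := fun ω ω' h => funext fun i =>
    Int.cast_injective (congrFun h i)
  obtain ⟨c, hc, rfl⟩ := (Set.mem_fintype_sum _ _).1 hu
  have hw : ∀ j, ∃ w : (Fin n → ℤ) → ℝ, (∀ ω ∈ A j, 0 ≤ w ω) ∧ ∑ ω ∈ A j, w ω = 1 ∧
      v j • ∑ ω ∈ A j, w ω • f ω = c j := by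
    intro j
    obtain ⟨x, hx, hxc⟩ := hc j
    rw [← Finset.coe_image, Finset.mem_convexHull'] at hx
    obtain ⟨w, hw0, hw1, hwx⟩ := hx
    rw [Finset.sum_image hfinj.injOn] at hw1 hwx
    exact ⟨fun ω => w (f ω), fun ω hω => hw0 _ (Finset.mem_image_of_mem f hω), hw1,
      by rw [hwx]; exact hxc⟩
  choose w hw0 hw1 hwc using hw
  refine ⟨fun j ω => v j * |w j ω|, fun j ω => mul_nonneg (hv j) (abs_nonneg _), ?_⟩
  have habs : ∀ j, ∀ ω ∈ A j, (v j * |w j ω|) •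
      (Fin.append (Pi.single j (1 : ℝ)) (f ω) : Fin (e + n) → ℝ) =
      (v j * w j ω) • Fin.append (Pi.single j (1 : ℝ)) (f ω) := fun j ω hω => by
    rw [abs_of_nonneg (hw0 j ω hω)]
  rw [Finset.sum_congr rfl fun j _ => Finset.sum_congr rfl (habs j)]
  ext i
  refine Fin.addCases (fun k => ?_) (fun k => ?_) i
  · simp only [Fin.append_left, Finset.sum_apply, Pi.smul_apply, smul_eq_mul,
      ← Finset.sum_mul, ← Finset.mul_sum, hw1, mul_one]
    simp [Pi.single_apply]
  · simp only [Fin.append_right, Finset.sum_apply, Pi.smul_apply, smul_eq_mul]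
    refine Finset.sum_congr rfl fun j _ => ?_
    rw [← hwc j]
    simp [Finset.mul_sum, mul_assoc]

theorem append_single_dotProduct_append {n e : ℕ} (j : Fin e) (x : Fin n → ℝ) (h : Fin e → ℝ)
    (ψ : Fin n → ℝ) :
    (Fin.append (Pi.single j (1 : ℝ)) x : Fin (e + n) → ℝ) ⬝ᵥ Fin.append h ψ =
      h j + x ⬝ᵥ ψ := by
  simp [dotProduct, Fin.sum_univ_add, Pi.single_apply]

/-- Filliman-duality formula: for a triangulation `T` of the Cayley cone `Cone(Â)` into
simplicial cones with generators in `Â` (columns of matrices `A_σ`), if `u` is interior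
to `P = Σ_j v_j·conv(A_j)` and `X = (v,u)` avoids all facet hyperplanes, then
`n!·vol((P−u)^∘) = (v₁⋯v_e) Σ_{σ∈T} 1/(|det A_σ| ∏ᵢ (A_σ⁻¹X)ᵢ)`. -/
theorem stmt_11 (n e : ℕ) (A : Fin e → Finset (Fin n → ℤ)) (hA : ∀ j, (A j).Nonempty)
    (v : Fin e → ℝ) (hv : ∀ j, 0 < v j) (u : Fin n → ℝ)
    (P : Set (Fin n → ℝ))
    (hP : P = ∑ j, v j •
        convexHull ℝ ((fun ω : Fin n → ℤ => fun i => (ω i : ℝ)) '' ↑(A j)))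
    (hPdim : (interior P).Nonempty)
    (cay : Fin e → (Fin n → ℤ) → (Fin (e + n) → ℝ))
    (hcay : ∀ j ω, cay j ω = Fin.append (Pi.single j (1 : ℝ)) (fun i => (ω i : ℝ)))
    (Ahat : Set (Fin (e + n) → ℝ)) (hAhat : Ahat = ⋃ j, cay j '' ↑(A j))
    (ConeA : Set (Fin (e + n) → ℝ))
    (hConeA : ConeA = {y | ∃ t : Fin e → (Fin n → ℤ) → ℝ, (∀ j ω, 0 ≤ t j ω) ∧
        y = ∑ j, ∑ ω ∈ A j, t j ω • cay j ω})
    (T : Finset (Matrix (Fin (e + n)) (Fin (e + n)) ℝ))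
    (hTcols : ∀ M ∈ T, ∀ k, (fun i => M i k) ∈ Ahat)
    (hTindep : ∀ M ∈ T, M.det ≠ 0)
    (coneM : Matrix (Fin (e + n)) (Fin (e + n)) ℝ → Set (Fin (e + n) → ℝ))
    (hconeM : ∀ M, coneM M =
        {y | ∃ t : Fin (e + n) → ℝ, (∀ k, 0 ≤ t k) ∧ y = ∑ k, t k • fun i => M i k})
    (hcover : ConeA = ⋃ M ∈ T, coneM M)
    (hdisj : ∀ M ∈ T, ∀ M' ∈ T, M ≠ M' → volume (coneM M ∩ coneM M') = 0)
    (X : Fin (e + n) → ℝ) (hX : X = Fin.append v u)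
    (hu : u ∈ interior P)
    (hXT : ∀ M ∈ T, ∀ k, (M⁻¹ *ᵥ X) k ≠ 0)
    (Pdual : Set (Fin n → ℝ))
    (hPdual : Pdual = {ψ | ∀ p ∈ P, -1 ≤ ∑ i, ψ i * (p i - u i)}) :
    (n.factorial : ℝ) * (volume Pdual).toReal
      = (∏ j, v j) * ∑ M ∈ T, 1 / (|M.det| * ∏ k, (M⁻¹ *ᵥ X) k) := by
  classical
  set f : (Fin n → ℤ) → Fin n → ℝ := fun ω i => (ω i : ℝ) with hf
  have huP : u ∈ P := interior_subset hu
  have hcone : ∀ M ∈ T, coneM M = {x | ∀ k, 0 ≤ (M⁻¹ *ᵥ x) k} := by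
    intro M hM
    have hsum : ∀ t : Fin (e + n) → ℝ, ∑ k, t k • (fun i => M i k) = M *ᵥ t := fun t => by
      ext i
      simp [mulVec, dotProduct, mul_comm]
    ext y
    rw [hconeM M]
    constructor
    · rintro ⟨t, ht, rfl⟩ k
      rw [hsum, mulVec_mulVec, nonsing_inv_mul _ (hTindep M hM).isUnit, one_mulVec]
      exact ht k
    · intro hy
      refine ⟨M⁻¹ *ᵥ y, hy, ?_⟩
      rw [hsum, mulVec_mulVec, mul_nonsing_inv _ (hTindep M hM).isUnit, one_mulVec]
  have hadd : ∀ x ∈ ConeA, ∀ y ∈ ConeA, x + y ∈ ConeA := by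
    rw [hConeA]
    rintro _ ⟨t, ht, rfl⟩ _ ⟨t', ht', rfl⟩
    exact ⟨fun j ω => t j ω + t' j ω, fun j ω => add_nonneg (ht j ω) (ht' j ω), by
      simp only [add_smul, Finset.sum_add_distrib]⟩
  have hsmul : ∀ x ∈ ConeA, ∀ r : ℝ, 0 ≤ r → r • x ∈ ConeA := by
    rw [hConeA]
    rintro _ ⟨t, ht, rfl⟩ r hr
    exact ⟨fun j ω => r * t j ω, fun j ω => mul_nonneg hr (ht j ω), by
      simp only [Finset.smul_sum, mul_smul]⟩
  have hXC : X ∈ ConeA := by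
    rw [hP] at huP
    rw [hConeA, hX]
    simp only [hcay]
    exact append_mem_cayley_cone (fun j => (hv j).le) huP
  obtain ⟨hint, heq⟩ := integral_dual_exp_eq_sum T hTindep ConeA hadd hsmul
    (hcover.trans (Set.iUnion₂_congr hcone))
    (fun M hM M' hM' hne => by rw [← hcone M hM, ← hcone M' hM']; exact hdisj M hM M' hM' hne)
    X hXC hXT
  set m : Fin e → (Fin n → ℝ) → ℝ := fun j ψ => (A j).inf' (hA j) fun ω => f ω ⬝ᵥ ψ with hm
  have hleast : ∀ j ψ, IsLeast ((fun x => x ⬝ᵥ ψ) '' (f '' ↑(A j))) (m j ψ) := by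
    intro j ψ
    constructor
    · obtain ⟨ω, hω, h⟩ := Finset.exists_mem_eq_inf' (hA j) fun ω => f ω ⬝ᵥ ψ
      exact ⟨f ω, ⟨ω, hω, rfl⟩, h.symm⟩
    · rintro _ ⟨_, ⟨ω, hω, rfl⟩, rfl⟩
      exact Finset.inf'_le (fun ω => f ω ⬝ᵥ ψ) hω
  have hleastP : ∀ ψ, IsLeast ((fun x => x ⬝ᵥ ψ) '' P) (∑ j, v j * m j ψ) := fun ψ => by
    rw [hP]
    exact isLeast_dotProduct_sum_smul_convexHull (fun j => (hv j).le) fun j => hleast j ψ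
  have hdual : ∀ h ψ, (∀ x ∈ ConeA, 0 ≤ x ⬝ᵥ Fin.append h ψ) ↔ ∀ j, 0 ≤ h j + m j ψ := by
    intro h ψ
    have hdot : ∀ j ω, cay j ω ⬝ᵥ Fin.append h ψ = h j + f ω ⬝ᵥ ψ := fun j ω => by
      rw [hcay, append_single_dotProduct_append]
    rw [hConeA]
    constructor
    · intro hx j
      obtain ⟨_, ⟨ω, hω, rfl⟩, hωm⟩ := (hleast j ψ).1
      rw [← hωm]
      change 0 ≤ h j + f ω ⬝ᵥ ψ
      rw [← hdot]
      refine hx _ ⟨fun j' ω' => if j' = j ∧ ω' = ω then 1 else 0,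
        fun j' ω' => by positivity, ?_⟩
      rw [Finset.sum_eq_single_of_mem j (Finset.mem_univ j) fun j' _ hj' => by simp [hj'],
        Finset.sum_eq_single_of_mem ω hω fun ω' _ hω' => by simp [hω']]
      simp
    · rintro hj _ ⟨t, ht, rfl⟩
      simp only [sum_dotProduct, smul_dotProduct, smul_eq_mul, hdot]
      refine Finset.sum_nonneg fun j _ => Finset.sum_nonneg fun ω hω =>
        mul_nonneg (ht j ω) ((hj j).trans ?_)
      gcongr
      exact (hleast j ψ).2 ⟨f ω, ⟨ω, hω, rfl⟩, rfl⟩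
  set g : (Fin n → ℝ) → ℝ := fun ψ => u ⬝ᵥ ψ - ∑ j, v j * m j ψ with hg
  have hg0 : ∀ ψ, 0 ≤ g ψ := fun ψ => sub_nonneg.2 ((hleastP ψ).2 ⟨u, huP, rfl⟩)
  have hgm : Measurable g := by
    have : ∀ j, Continuous (m j) := fun j =>
      Continuous.finset_inf'_apply (hA j) fun ω _ => by fun_prop
    exact Continuous.measurable (by fun_prop)
  have hgs : ∀ r : ℝ, 0 < r → ∀ ψ, g (r • ψ) = r * g ψ := by
    intro r hr ψ
    have hmr : ∀ j, m j (r • ψ) = r * m j ψ := fun j => by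
      refine (hleast j (r • ψ)).unique ?_
      have := (monotone_mul_left_of_nonneg hr.le).map_isLeast (hleast j ψ)
      rw [Set.image_image] at this
      simpa only [dotProduct_smul, smul_eq_mul] using this
    simp only [hg, dotProduct_smul, hmr, smul_eq_mul, mul_sub, Finset.mul_sum, mul_left_comm]
  have hPd : Pdual = {ψ | g ψ ≤ 1} := by
    rw [hPdual]
    ext ψ
    have hdot : ∀ p : Fin n → ℝ, ∑ i, ψ i * (p i - u i) = p ⬝ᵥ ψ - u ⬝ᵥ ψ := fun p => by
      rw [dotProduct_comm p, dotProduct_comm u, ← dotProduct_sub]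
      rfl
    simp only [Set.mem_ofPred_eq, hdot, hg]
    constructor
    · intro h
      obtain ⟨p, hp, hpm⟩ := (hleastP ψ).1
      have := h p hp
      change p ⬝ᵥ ψ = _ at hpm
      linarith
    · intro h p hp
      have : _ ≤ p ⬝ᵥ ψ := (hleastP ψ).2 ⟨p, hp, rfl⟩
      linarith
  have hinner : ∀ ψ : Fin n → ℝ, ∫ h : Fin e → ℝ,
      (if ∀ x ∈ ConeA, 0 ≤ x ⬝ᵥ Fin.append h ψ then
        Real.exp (-(X ⬝ᵥ Fin.append h ψ)) else 0) =
      (∏ j, v j)⁻¹ * Real.exp (-g ψ) := by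
    intro ψ
    have hfun : ∀ h : Fin e → ℝ, (if ∀ x ∈ ConeA, 0 ≤ x ⬝ᵥ Fin.append h ψ then
        Real.exp (-(X ⬝ᵥ Fin.append h ψ)) else 0) = Real.exp (-(u ⬝ᵥ ψ)) *
        if ∀ j, 0 ≤ h j + m j ψ then Real.exp (-∑ j, v j * h j) else 0 := by
      intro h
      rw [if_congr (hdual h ψ) rfl rfl, mul_ite, mul_zero, ← Real.exp_add]
      have : X ⬝ᵥ Fin.append h ψ = ∑ j, v j * h j + u ⬝ᵥ ψ := by
        simp [hX, dotProduct, Fin.sum_univ_add]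
      rw [this, neg_add_rev]
    simp_rw [hfun]
    rw [integral_const_mul, integral_ite_exp_eq_prod hv, mul_left_comm, ← Real.exp_add, hg,
      neg_sub, neg_add_eq_sub]
  rw [integral_eq_integral_integral_append hint] at heq
  simp_rw [hinner] at heq
  rw [integral_const_mul, integral_eq_lintegral_of_nonneg_ae
    (Filter.Eventually.of_forall fun ψ => (Real.exp_pos _).le)
    (by fun_prop), lintegral_exp_neg_eq_factorial_mul hgm hg0 hgs, ENNReal.toReal_mul,
    ENNReal.toReal_ofReal (Nat.cast_nonneg _), ← hPd] at heq
  rw [← heq, mul_inv_cancel_left₀ (Finset.prod_ne_zero_iff.2 fun j _ => (hv j).ne')]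
end

section
/- Let q₁,…,q_e be Laurent polynomials in n variables with positive coefficients, let v₁,…,v_e > 0, and set P := Σ_{j=1}^e v_j · New(q_j), assumed to be n-dimensional. Define μ : ℝⁿ_{>0} → ℝⁿ by μ(x)_i := Σ_{j=1}^e v_j · (x_i · ∂q_j/∂x_i(x)) / q_j(x) for i = 1,…,n. Then μ is a smooth diffeomorphism from ℝⁿ_{>0} onto the interior of P, and its Jacobian determinant is strictly positive at every point of ℝⁿ_{>0} (μ is orientation preserving). -/
open MeasureTheory Real Pointwise

open scoped Matrix Topology

section ExponentialFamily

variable {ι σ : Type*} [Fintype σ]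

/-- The exponential sum `∑ k ∈ s, c k * exp (a k ⬝ᵥ y)`. -/
noncomputable def expSum (s : Finset ι) (c : ι → ℝ) (a : ι → σ → ℝ) (y : σ → ℝ) : ℝ :=
  ∑ k ∈ s, c k * exp (a k ⬝ᵥ y)

/-- The normalized weight of the `k`-th term of an exponential sum. -/
noncomputable def gibbsWeight (s : Finset ι) (c : ι → ℝ) (a : ι → σ → ℝ) (y : σ → ℝ)
    (k : ι) : ℝ :=
  c k * exp (a k ⬝ᵥ y) / expSum s c a y

/-- The mean of the exponents of an exponential sum with respect to the normalized weights. -/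
noncomputable def gibbsMean (s : Finset ι) (c : ι → ℝ) (a : ι → σ → ℝ) (y : σ → ℝ) : σ → ℝ :=
  ∑ k ∈ s, gibbsWeight s c a y k • a k

/-- The covariance matrix of the exponents of an exponential sum with respect to the normalized
weights. -/
noncomputable def gibbsCov (s : Finset ι) (c : ι → ℝ) (a : ι → σ → ℝ) (y : σ → ℝ) :
    Matrix σ σ ℝ :=
  ∑ k ∈ s, gibbsWeight s c a y k •
    Matrix.vecMulVec (a k - gibbsMean s c a y) (a k - gibbsMean s c a y)

/-- The dot product with a fixed vector as a continuous linear form. -/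
noncomputable def dotCLM (u : σ → ℝ) : (σ → ℝ) →L[ℝ] ℝ :=
  LinearMap.toContinuousLinearMap (dotProductBilin ℝ ℝ u)

@[simp]
lemma dotCLM_apply (u y : σ → ℝ) : dotCLM u y = u ⬝ᵥ y := rfl

variable {s : Finset ι} {c : ι → ℝ} {a : ι → σ → ℝ}

lemma hasFDerivAt_dotProduct (u y : σ → ℝ) :
    HasFDerivAt (fun y => u ⬝ᵥ y) (dotCLM u) y :=
  (dotCLM u).hasFDerivAt

lemma contDiff_dotProduct (u : σ → ℝ) : ContDiff ℝ (⊤ : ℕ∞) (fun y : σ → ℝ => u ⬝ᵥ y) :=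
  (dotCLM u).contDiff

lemma expSum_pos (hs : s.Nonempty) (hc : ∀ k ∈ s, 0 < c k) (y : σ → ℝ) :
    0 < expSum s c a y :=
  Finset.sum_pos (fun k hk => mul_pos (hc k hk) (exp_pos _)) hs

lemma gibbsWeight_pos (hs : s.Nonempty) (hc : ∀ k ∈ s, 0 < c k) (y : σ → ℝ) {k : ι}
    (hk : k ∈ s) : 0 < gibbsWeight s c a y k :=
  div_pos (mul_pos (hc k hk) (exp_pos _)) (expSum_pos hs hc y)

lemma sum_gibbsWeight (hs : s.Nonempty) (hc : ∀ k ∈ s, 0 < c k) (y : σ → ℝ) :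
    ∑ k ∈ s, gibbsWeight s c a y k = 1 := by
  simp only [gibbsWeight]
  rw [← Finset.sum_div]
  exact div_self (expSum_pos hs hc y).ne'

lemma gibbsMean_apply (y : σ → ℝ) (i : σ) :
    gibbsMean s c a y i = (∑ k ∈ s, c k * exp (a k ⬝ᵥ y) * a k i) / expSum s c a y := by
  simp only [gibbsMean, gibbsWeight, Finset.sum_apply, Pi.smul_apply, smul_eq_mul, Finset.sum_div]
  exact Finset.sum_congr rfl fun k _ => by ring

lemma contDiff_expSum : ContDiff ℝ (⊤ : ℕ∞) (expSum s c a) :=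
  ContDiff.sum fun k _ => contDiff_const.mul (contDiff_dotProduct (a k)).exp

lemma contDiff_gibbsMean (hs : s.Nonempty) (hc : ∀ k ∈ s, 0 < c k) :
    ContDiff ℝ (⊤ : ℕ∞) (gibbsMean s c a) :=
  ContDiff.sum fun k _ => ((contDiff_const.mul (contDiff_dotProduct (a k)).exp).div
    contDiff_expSum fun y => (expSum_pos hs hc y).ne').smul contDiff_const

lemma hasFDerivAt_sum_mul_exp (b : ι → ℝ) (y : σ → ℝ) :
    HasFDerivAt (fun y => ∑ k ∈ s, b k * exp (a k ⬝ᵥ y))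
      (∑ k ∈ s, (b k * exp (a k ⬝ᵥ y)) • dotCLM (a k)) y := by
  refine HasFDerivAt.fun_sum fun k _ => ?_
  simpa [smul_smul] using ((hasFDerivAt_dotProduct (a k) y).exp.const_mul (b k))

lemma gibbsMean_dotProduct (y d : σ → ℝ) :
    gibbsMean s c a y ⬝ᵥ d = ∑ k ∈ s, gibbsWeight s c a y k * (a k ⬝ᵥ d) := by
  simp [gibbsMean, sum_dotProduct, smul_dotProduct]

lemma hasFDerivAt_log_expSum (hs : s.Nonempty) (hc : ∀ k ∈ s, 0 < c k) (y : σ → ℝ) :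
    HasFDerivAt (fun y => log (expSum s c a y)) (dotCLM (gibbsMean s c a y)) y := by
  refine ((hasFDerivAt_sum_mul_exp (s := s) (a := a) c y).log
    (expSum_pos hs hc y).ne').congr_fderiv (ContinuousLinearMap.ext fun d => ?_)
  simp only [dotCLM_apply, gibbsMean_dotProduct, gibbsWeight, smul_apply, sum_apply,
    smul_eq_mul, Finset.mul_sum]
  exact Finset.sum_congr rfl fun k _ => by simp only [expSum]; ring

lemma gibbsCov_mulVec (y d : σ → ℝ) :
    gibbsCov s c a y *ᵥ d = ∑ k ∈ s,
      (gibbsWeight s c a y k * ((a k - gibbsMean s c a y) ⬝ᵥ d)) • (a k - gibbsMean s c a y) := by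
  rw [gibbsCov, Matrix.sum_mulVec]
  refine Finset.sum_congr rfl fun k _ => ?_
  rw [Matrix.smul_mulVec, Matrix.vecMulVec_mulVec, op_smul_eq_smul, smul_smul]

lemma dotProduct_gibbsCov_mulVec (y d : σ → ℝ) :
    d ⬝ᵥ gibbsCov s c a y *ᵥ d =
      ∑ k ∈ s, gibbsWeight s c a y k * ((a k - gibbsMean s c a y) ⬝ᵥ d) ^ 2 := by
  rw [gibbsCov_mulVec, dotProduct_sum]
  refine Finset.sum_congr rfl fun k _ => ?_
  rw [dotProduct_smul, dotProduct_comm d, smul_eq_mul]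
  ring

lemma isSymm_gibbsCov (y : σ → ℝ) : (gibbsCov s c a y).IsSymm := by
  simp [Matrix.IsSymm, gibbsCov, Matrix.transpose_sum, Matrix.transpose_vecMulVec]

lemma hasFDerivAt_gibbsMean [DecidableEq σ] (hs : s.Nonempty) (hc : ∀ k ∈ s, 0 < c k)
    (y : σ → ℝ) :
    HasFDerivAt (gibbsMean s c a)
      (LinearMap.toContinuousLinearMap (Matrix.toLin' (gibbsCov s c a y))) y := by
  have hZ := (expSum_pos (a := a) hs hc y).ne'
  rw [hasFDerivAt_pi']
  intro i
  have h := (hasFDerivAt_sum_mul_exp (s := s) (a := a) (fun k => c k * a k i) y).mul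
    ((hasDerivAt_inv hZ).comp_hasFDerivAt y (hasFDerivAt_sum_mul_exp (s := s) (a := a) c y))
  refine (h.congr_fderiv (ContinuousLinearMap.ext fun d => ?_)).congr_of_eventuallyEq
    (.of_forall fun z => ?_)
  · have h₁ : (∑ k ∈ s, c k * a k i * exp (a k ⬝ᵥ y)) = gibbsMean s c a y i * expSum s c a y := by
      rw [gibbsMean_apply, div_mul_cancel₀ _ hZ]
      exact Finset.sum_congr rfl fun k _ => by ring
    have h₂ : (∑ k ∈ s, c k * exp (a k ⬝ᵥ y) * (a k ⬝ᵥ d))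
        = (gibbsMean s c a y ⬝ᵥ d) * expSum s c a y := by
      rw [gibbsMean_dotProduct, Finset.sum_mul]
      exact Finset.sum_congr rfl fun k _ => by simp only [gibbsWeight]; field_simp
    have h₃ : (∑ k ∈ s, c k * a k i * exp (a k ⬝ᵥ y) * (a k ⬝ᵥ d))
        = (∑ k ∈ s, gibbsWeight s c a y k * a k i * (a k ⬝ᵥ d)) * expSum s c a y := by
      rw [Finset.sum_mul]
      exact Finset.sum_congr rfl fun k _ => by simp only [gibbsWeight]; field_simp
    have h₄ : (gibbsCov s c a y *ᵥ d) i = (∑ k ∈ s, gibbsWeight s c a y k * a k i * (a k ⬝ᵥ d))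
        - gibbsMean s c a y i * (gibbsMean s c a y ⬝ᵥ d) := by
      have e₁ := gibbsMean_dotProduct (s := s) (c := c) (a := a) y d
      have e₂ : gibbsMean s c a y i = ∑ k ∈ s, gibbsWeight s c a y k * a k i := by
        simp [gibbsMean]
      have e₃ := sum_gibbsWeight (a := a) hs hc y
      rw [gibbsCov_mulVec]
      generalize gibbsMean s c a y = m at *
      calc _ = (∑ k ∈ s, gibbsWeight s c a y k * a k i * (a k ⬝ᵥ d))
            - m i * (∑ k ∈ s, gibbsWeight s c a y k * (a k ⬝ᵥ d))
            - (m ⬝ᵥ d) * (∑ k ∈ s, gibbsWeight s c a y k * a k i)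
            + (m ⬝ᵥ d) * m i * ∑ k ∈ s, gibbsWeight s c a y k := by
            simp only [Finset.mul_sum, ← Finset.sum_sub_distrib, ← Finset.sum_add_distrib,
              Finset.sum_apply, Pi.smul_apply, Pi.sub_apply, smul_eq_mul, sub_dotProduct]
            exact Finset.sum_congr rfl fun k _ => by ring
        _ = _ := by rw [← e₁, ← e₂, e₃]; ring
    simp only [add_apply, smul_apply, sum_apply, dotCLM_apply, smul_eq_mul, h₁, h₂, h₃,
      Function.comp_apply, ContinuousLinearMap.comp_apply, ContinuousLinearMap.proj_apply,
      LinearMap.coe_toContinuousLinearMap', Matrix.toLin'_apply, h₄]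
    change _ + (expSum s c a y)⁻¹ * _ = _
    change _ * (-(expSum s c a y ^ 2)⁻¹ * _) + _ = _
    field_simp
    ring
  · simp only [gibbsMean_apply, div_eq_mul_inv, expSum]
    congr 1
    exact Finset.sum_congr rfl fun k _ => by ring

lemma gibbsMean_mem_convexHull (hs : s.Nonempty) (hc : ∀ k ∈ s, 0 < c k) (y : σ → ℝ) :
    gibbsMean s c a y ∈ convexHull ℝ (a '' s) :=
  (convex_convexHull ℝ _).sum_mem (fun _ hk => (gibbsWeight_pos hs hc y hk).le)
    (sum_gibbsWeight hs hc y) fun k hk => subset_convexHull ℝ _ ⟨k, hk, rfl⟩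

lemma dotProduct_le_log_expSum (hc : ∀ k ∈ s, 0 < c k) {x : σ → ℝ}
    (hx : x ∈ convexHull ℝ (a '' s)) (y : σ → ℝ) :
    x ⬝ᵥ y ≤ log (expSum s c a y) + ∑ k ∈ s, |log (c k)| := by
  have hconv : Convex ℝ {x : σ → ℝ | x ⬝ᵥ y ≤ log (expSum s c a y) + ∑ k ∈ s, |log (c k)|} := by
    simp only [dotProduct_comm _ y]
    exact convex_halfSpace_le (dotCLM y).toLinearMap.isLinear _
  refine convexHull_min ?_ hconv hx
  rintro _ ⟨k, hk, rfl⟩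
  have hk' : k ∈ s := hk
  have h₁ : c k * exp (a k ⬝ᵥ y) ≤ expSum s c a y :=
    Finset.single_le_sum (f := fun k => c k * exp (a k ⬝ᵥ y))
      (fun j hj => (mul_pos (hc j hj) (exp_pos _)).le) hk'
  have h₂ := log_le_log (mul_pos (hc k hk') (exp_pos _)) h₁
  rw [log_mul (hc k hk').ne' (exp_pos _).ne', log_exp] at h₂
  have h₃ : |log (c k)| ≤ ∑ k ∈ s, |log (c k)| :=
    Finset.single_le_sum (f := fun k => |log (c k)|) (fun j _ => abs_nonneg _) hk'
  have := neg_abs_le (log (c k))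
  simp only [Set.mem_ofPred_eq]
  linarith

lemma dotProduct_eq_of_mem_convexHull {x d : σ → ℝ} {r : ℝ} (h : ∀ k ∈ s, a k ⬝ᵥ d = r)
    (hx : x ∈ convexHull ℝ (a '' s)) : x ⬝ᵥ d = r := by
  have hconv : Convex ℝ {x : σ → ℝ | x ⬝ᵥ d = r} := by
    simp only [dotProduct_comm _ d]
    exact convex_hyperplane (dotCLM d).toLinearMap.isLinear _
  exact convexHull_min (by rintro _ ⟨k, hk, rfl⟩; exact h k hk) hconv hx

lemma exists_add_norm_le_dotProduct {P : Set (σ → ℝ)} {p : σ → ℝ} (hp : p ∈ interior P) :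
    ∃ r > 0, ∀ y, ∃ p' ∈ P, p ⬝ᵥ y + r * ‖y‖ ≤ p' ⬝ᵥ y := by
  obtain ⟨r, hr, hball⟩ := Metric.nhds_basis_closedBall.mem_iff.1 (mem_interior_iff_mem_nhds.1 hp)
  refine ⟨r, hr, fun y => ⟨p + r • fun i => (SignType.sign (y i) : ℝ), hball ?_, ?_⟩⟩
  · rw [Metric.mem_closedBall, dist_eq_norm, add_sub_cancel_left, norm_smul, norm_of_nonneg hr.le]
    refine mul_le_of_le_one_right hr.le ((pi_norm_le_iff_of_nonneg zero_le_one).2 fun i => ?_)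
    rcases lt_trichotomy (y i) 0 with h | h | h <;> simp [h]
  · rw [add_dotProduct, smul_dotProduct, smul_eq_mul]
    have : ‖y‖ ≤ (fun i => (SignType.sign (y i) : ℝ)) ⬝ᵥ y := by
      have h : (fun i => (SignType.sign (y i) : ℝ)) ⬝ᵥ y = ∑ i, ‖y i‖ := by
        simp [dotProduct, norm_eq_abs, sign_mul_self]
      rw [h]
      exact (pi_norm_le_iff_of_nonneg (Finset.sum_nonneg fun _ _ => norm_nonneg _)).2 fun i =>
        Finset.single_le_sum (f := fun i => ‖y i‖) (fun _ _ => norm_nonneg _) (Finset.mem_univ i)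
    gcongr

end ExponentialFamily

section MomentMap

variable {κ ι σ : Type*} [Fintype κ] [Fintype σ]

/-- The gradient of `y ↦ ∑ j, v j * log (expSum (s j) (c j) a y)`. -/
noncomputable def momentMap (s : κ → Finset ι) (c : κ → ι → ℝ) (a : ι → σ → ℝ) (v : κ → ℝ)
    (y : σ → ℝ) : σ → ℝ :=
  ∑ j, v j • gibbsMean (s j) (c j) a y

/-- The Hessian matrix of `y ↦ ∑ j, v j * log (expSum (s j) (c j) a y)`. -/
noncomputable def momentHessian (s : κ → Finset ι) (c : κ → ι → ℝ) (a : ι → σ → ℝ) (v : κ → ℝ)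
    (y : σ → ℝ) : Matrix σ σ ℝ :=
  ∑ j, v j • gibbsCov (s j) (c j) a y

variable {s : κ → Finset ι} {c : κ → ι → ℝ} {a : ι → σ → ℝ} {v : κ → ℝ}

lemma mem_sum_smul_convexHull {τ : Type*} {a : ι → τ → ℝ} {p : τ → ℝ} :
    p ∈ ∑ j, v j • convexHull ℝ (a '' (s j)) ↔
      ∃ x : κ → τ → ℝ, (∀ j, x j ∈ convexHull ℝ (a '' (s j))) ∧ ∑ j, v j • x j = p := by
  rw [Set.mem_fintype_sum]
  constructor
  · rintro ⟨g, hg, rfl⟩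
    choose x hx hxg using fun j => Set.mem_smul_set.1 (hg j)
    exact ⟨x, hx, by simp only [hxg]⟩
  · rintro ⟨x, hx, rfl⟩
    exact ⟨_, fun j => Set.smul_mem_smul_set (hx j), rfl⟩

lemma contDiff_momentMap (hs : ∀ j, (s j).Nonempty) (hc : ∀ j, ∀ k ∈ s j, 0 < c j k) :
    ContDiff ℝ (⊤ : ℕ∞) (momentMap s c a v) :=
  ContDiff.sum fun j _ => (contDiff_gibbsMean (hs j) (hc j)).const_smul (v j)

lemma hasFDerivAt_momentMap [DecidableEq σ] (hs : ∀ j, (s j).Nonempty)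
    (hc : ∀ j, ∀ k ∈ s j, 0 < c j k) (y : σ → ℝ) :
    HasFDerivAt (momentMap s c a v)
      (LinearMap.toContinuousLinearMap (Matrix.toLin' (momentHessian s c a v y))) y := by
  refine (HasFDerivAt.fun_sum (u := Finset.univ) fun j _ =>
    (hasFDerivAt_gibbsMean (a := a) (hs j) (hc j) y).const_smul (v j)).congr_fderiv ?_
  ext1 d
  simp [momentHessian, sum_apply]

lemma posDef_momentHessian (hs : ∀ j, (s j).Nonempty) (hc : ∀ j, ∀ k ∈ s j, 0 < c j k)
    (hv : ∀ j, 0 < v j) (hP : (interior (∑ j, v j • convexHull ℝ (a '' (s j)))).Nonempty)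
    (y : σ → ℝ) : (momentHessian s c a v y).PosDef := by
  refine .of_dotProduct_mulVec_pos ?_ fun d hd => ?_
  · simp [Matrix.IsHermitian, momentHessian, Matrix.transpose_sum,
      (isSymm_gibbsCov y).eq]
  · have hsum : d ⬝ᵥ momentHessian s c a v y *ᵥ d = ∑ j, v j * ∑ k ∈ s j,
        gibbsWeight (s j) (c j) a y k * ((a k - gibbsMean (s j) (c j) a y) ⬝ᵥ d) ^ 2 := by
      simp only [momentHessian, Matrix.sum_mulVec, Matrix.smul_mulVec, dotProduct_sum,
        dotProduct_smul, dotProduct_gibbsCov_mulVec, smul_eq_mul]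
    have hin (j) (k) (hk : k ∈ s j) : 0 ≤
        gibbsWeight (s j) (c j) a y k * ((a k - gibbsMean (s j) (c j) a y) ⬝ᵥ d) ^ 2 :=
      mul_nonneg (gibbsWeight_pos (hs j) (hc j) y hk).le (sq_nonneg _)
    have hout (j) : 0 ≤ v j * ∑ k ∈ s j,
        gibbsWeight (s j) (c j) a y k * ((a k - gibbsMean (s j) (c j) a y) ⬝ᵥ d) ^ 2 :=
      mul_nonneg (hv j).le (Finset.sum_nonneg (hin j))
    rw [star_trivial, hsum]
    refine (Finset.sum_nonneg fun j _ => hout j).lt_of_ne' fun h0 => ?_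
    have hconst (j) (k) (hk : k ∈ s j) : a k ⬝ᵥ d = gibbsMean (s j) (c j) a y ⬝ᵥ d := by
      have h1 := (Finset.sum_eq_zero_iff_of_nonneg fun j _ => hout j).1 h0 j (Finset.mem_univ j)
      have h2 := (mul_eq_zero.1 h1).resolve_left (hv j).ne'
      have h3 := (mul_eq_zero.1 ((Finset.sum_eq_zero_iff_of_nonneg (hin j)).1 h2 k hk)).resolve_left
        (gibbsWeight_pos (hs j) (hc j) y hk).ne'
      rw [sub_dotProduct] at h3
      exact sub_eq_zero.1 (pow_eq_zero_iff two_ne_zero |>.1 h3)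
    have hPconst (p) (hp : p ∈ ∑ j, v j • convexHull ℝ (a '' (s j))) :
        p ⬝ᵥ d = ∑ j, v j * (gibbsMean (s j) (c j) a y ⬝ᵥ d) := by
      obtain ⟨x, hx, rfl⟩ := mem_sum_smul_convexHull.1 hp
      simp only [sum_dotProduct, smul_dotProduct, smul_eq_mul]
      exact Finset.sum_congr rfl fun j _ => by
        rw [dotProduct_eq_of_mem_convexHull (hconst j) (hx j)]
    obtain ⟨p, hp⟩ := hP
    obtain ⟨r, hr, h⟩ := exists_add_norm_le_dotProduct hp
    obtain ⟨p', hp', hle⟩ := h d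
    rw [hPconst p (interior_subset hp), hPconst p' hp'] at hle
    have := mul_pos hr (norm_pos_iff.2 hd)
    linarith

lemma injective_of_hasFDerivAt_pos {f : (σ → ℝ) → σ → ℝ} {f' : (σ → ℝ) → (σ → ℝ) →L[ℝ] (σ → ℝ)}
    (hf : ∀ y, HasFDerivAt f (f' y) y) (hpos : ∀ y d, d ≠ 0 → 0 < d ⬝ᵥ f' y d) :
    Function.Injective f := by
  intro y z hyz
  by_contra hne
  have hd : z - y ≠ 0 := sub_ne_zero.2 (Ne.symm hne)
  have hder (t : ℝ) : HasDerivAt (fun t : ℝ => (z - y) ⬝ᵥ f (y + t • (z - y)))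
      ((z - y) ⬝ᵥ f' (y + t • (z - y)) (z - y)) t := by
    have h1 : HasDerivAt (fun t : ℝ => y + t • (z - y)) (z - y) t := by
      simpa using ((hasDerivAt_id t).smul_const (z - y)).const_add y
    exact (dotCLM (z - y)).hasFDerivAt.comp_hasDerivAt t ((hf _).comp_hasDerivAt t h1)
  have := strictMono_of_deriv_pos (fun t => (hder t).deriv ▸ hpos _ _ hd) zero_lt_one
  simp [hyz] at this

lemma momentMap_injective (hs : ∀ j, (s j).Nonempty) (hc : ∀ j, ∀ k ∈ s j, 0 < c j k)
    (hv : ∀ j, 0 < v j) (hP : (interior (∑ j, v j • convexHull ℝ (a '' (s j)))).Nonempty) :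
    Function.Injective (momentMap s c a v) := by
  classical
  refine injective_of_hasFDerivAt_pos (hasFDerivAt_momentMap hs hc) fun y d hd => ?_
  simpa using (posDef_momentHessian hs hc hv hP y).dotProduct_mulVec_pos hd

/-- The Hessian as a continuous linear automorphism. -/
noncomputable def momentHessianEquiv [DecidableEq σ] (hs : ∀ j, (s j).Nonempty)
    (hc : ∀ j, ∀ k ∈ s j, 0 < c j k) (hv : ∀ j, 0 < v j)
    (hP : (interior (∑ j, v j • convexHull ℝ (a '' (s j)))).Nonempty) (y : σ → ℝ) :
    (σ → ℝ) ≃L[ℝ] (σ → ℝ) :=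
  (LinearMap.toContinuousLinearMap
    (Matrix.toLin' (momentHessian s c a v y))).toContinuousLinearEquivOfDetNeZero (by
      rw [ContinuousLinearMap.det, LinearMap.coe_toContinuousLinearMap, LinearMap.det_toLin']
      exact (posDef_momentHessian hs hc hv hP y).det_pos.ne')

lemma hasFDerivAt_momentMap_equiv [DecidableEq σ] (hs : ∀ j, (s j).Nonempty)
    (hc : ∀ j, ∀ k ∈ s j, 0 < c j k) (hv : ∀ j, 0 < v j)
    (hP : (interior (∑ j, v j • convexHull ℝ (a '' (s j)))).Nonempty) (y : σ → ℝ) :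
    HasFDerivAt (momentMap s c a v)
      (momentHessianEquiv hs hc hv hP y : (σ → ℝ) →L[ℝ] (σ → ℝ)) y := by
  rw [momentHessianEquiv, ContinuousLinearMap.coe_toContinuousLinearEquivOfDetNeZero]
  exact hasFDerivAt_momentMap hs hc y

lemma isOpenEmbedding_momentMap (hs : ∀ j, (s j).Nonempty) (hc : ∀ j, ∀ k ∈ s j, 0 < c j k)
    (hv : ∀ j, 0 < v j) (hP : (interior (∑ j, v j • convexHull ℝ (a '' (s j)))).Nonempty) :
    Topology.IsOpenEmbedding (momentMap s c a v) := by
  classical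
  refine .of_continuous_injective_isOpenMap (contDiff_momentMap hs hc).continuous
    (momentMap_injective hs hc hv hP) (isOpenMap_of_hasStrictFDerivAt_equiv fun y =>
      (contDiff_momentMap hs hc).contDiffAt.hasStrictFDerivAt'
        (hasFDerivAt_momentMap_equiv hs hc hv hP y) (by simp))

lemma exists_momentMap_eq (hs : ∀ j, (s j).Nonempty) (hc : ∀ j, ∀ k ∈ s j, 0 < c j k)
    (hv : ∀ j, 0 < v j) {p : σ → ℝ} (hp : p ∈ interior (∑ j, v j • convexHull ℝ (a '' (s j)))) :
    ∃ y, momentMap s c a v y = p := by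
  classical
  obtain ⟨r, hr, h⟩ := exists_add_norm_le_dotProduct hp
  let G : (σ → ℝ) → ℝ := fun y => ∑ j, v j * log (expSum (s j) (c j) a y) - p ⬝ᵥ y
  have hG (y) : HasFDerivAt G (dotCLM (momentMap s c a v y) - dotCLM p) y := by
    refine ((HasFDerivAt.fun_sum (u := Finset.univ) fun j _ =>
      (hasFDerivAt_log_expSum (a := a) (hs j) (hc j) y).const_mul (v j)).sub
        (hasFDerivAt_dotProduct p y)).congr_fderiv ?_
    ext1 d
    simp [momentMap, sum_apply, sum_dotProduct, smul_dotProduct]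
  have hbound (y) : r * ‖y‖ + -(∑ j, v j * ∑ k ∈ s j, |log (c j k)|) ≤ G y := by
    obtain ⟨p', hp', hle⟩ := h y
    obtain ⟨x, hx, rfl⟩ := mem_sum_smul_convexHull.1 hp'
    have : (∑ j, v j • x j) ⬝ᵥ y ≤ ∑ j, v j * log (expSum (s j) (c j) a y)
        + ∑ j, v j * ∑ k ∈ s j, |log (c j k)| := by
      rw [← Finset.sum_add_distrib, sum_dotProduct]
      refine Finset.sum_le_sum fun j _ => ?_
      rw [smul_dotProduct, smul_eq_mul, ← mul_add]
      exact mul_le_mul_of_nonneg_left (dotProduct_le_log_expSum (hc j) (hx j) y) (hv j).le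
    simp only [G]
    linarith
  have hlim : Filter.Tendsto G (Filter.cocompact _) Filter.atTop :=
    Filter.tendsto_atTop_mono hbound (Filter.tendsto_atTop_add_const_right _ _
      ((tendsto_norm_cocompact_atTop).const_mul_atTop hr))
  obtain ⟨y, hy⟩ := (continuous_iff_continuousAt.2 fun y => (hG y).continuousAt).exists_forall_le hlim
  have h0 := IsLocalMin.hasFDerivAt_eq_zero (Filter.Eventually.of_forall hy) (hG y)
  refine ⟨y, funext fun i => ?_⟩
  have := congrArg (fun L => L (Pi.single i 1)) (sub_eq_zero.1 h0)
  simpa using this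

lemma range_momentMap (hs : ∀ j, (s j).Nonempty) (hc : ∀ j, ∀ k ∈ s j, 0 < c j k)
    (hv : ∀ j, 0 < v j) (hP : (interior (∑ j, v j • convexHull ℝ (a '' (s j)))).Nonempty) :
    Set.range (momentMap s c a v) = interior (∑ j, v j • convexHull ℝ (a '' (s j))) := by
  refine Set.Subset.antisymm (interior_maximal ?_
    (isOpenEmbedding_momentMap hs hc hv hP).isOpen_range) fun p hp => exists_momentMap_eq hs hc hv hp
  rintro _ ⟨y, rfl⟩
  exact mem_sum_smul_convexHull.2 ⟨_, fun j => gibbsMean_mem_convexHull (hs j) (hc j) y, rfl⟩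

end MomentMap

section LogCoordinates

lemma contDiffOn_log_pi {σ : Type*} [Fintype σ] :
    ContDiffOn ℝ (⊤ : ℕ∞) (fun (x : σ → ℝ) i => log (x i)) (Set.univ.pi fun _ => Set.Ioi 0) :=
  contDiffOn_pi.2 fun i => (contDiff_apply ℝ ℝ i).contDiffOn.log fun _ hx => (hx i trivial).ne'

lemma hasFDerivAt_log_pi {σ : Type*} [Fintype σ] [DecidableEq σ] {x : σ → ℝ}
    (hx : ∀ i, 0 < x i) :
    HasFDerivAt (fun (x : σ → ℝ) i => log (x i))
      (LinearMap.toContinuousLinearMap (Matrix.toLin' (Matrix.diagonal fun i => (x i)⁻¹))) x := by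
  rw [hasFDerivAt_pi']
  intro i
  refine ((hasFDerivAt_apply (𝕜 := ℝ) i x).log (hx i).ne').congr_fderiv ?_
  ext1 d
  simp [Matrix.mulVec_diagonal]

lemma laurent_eq_expSum {σ : Type*} [Fintype σ] (s : Finset (σ → ℤ)) (c : (σ → ℤ) → ℝ)
    {x : σ → ℝ} (hx : ∀ i, 0 < x i) :
    ∑ ω ∈ s, c ω * ∏ i, x i ^ ω i =
      expSum s c (fun ω i => (ω i : ℝ)) (fun i => log (x i)) := by
  refine Finset.sum_congr rfl fun ω _ => ?_
  rw [dotProduct, exp_sum]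
  congr 1
  refine Finset.prod_congr rfl fun i _ => ?_
  rw [← rpow_intCast, rpow_def_of_pos (hx i), mul_comm]

lemma log_derivative_laurent {σ : Type*} [Fintype σ] [DecidableEq σ] {s : Finset (σ → ℤ)}
    {c : (σ → ℤ) → ℝ} (hs : s.Nonempty) (hc : ∀ k ∈ s, 0 < c k) {q : (σ → ℝ) → ℝ}
    (hq : ∀ x, q x = ∑ ω ∈ s, c ω * ∏ i, x i ^ ω i) {x : σ → ℝ} (hx : ∀ i, 0 < x i) (i : σ) :
    x i * fderiv ℝ q x (Pi.single i 1) / q x =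
      gibbsMean s c (fun ω i => (ω i : ℝ)) (fun i => log (x i)) i := by
  have hev : ∀ᶠ z in 𝓝 x, q z =
      expSum s c (fun ω i => (ω i : ℝ)) (fun i => log (z i)) := by
    filter_upwards [(isOpen_set_pi Set.finite_univ fun _ _ => isOpen_Ioi).mem_nhds
      (show x ∈ Set.univ.pi fun _ => Set.Ioi (0 : ℝ) from fun i _ => hx i)] with z hz
    rw [hq, laurent_eq_expSum s c fun i => hz i trivial]
  have hqx : 0 < q x := hev.self_of_nhds ▸ expSum_pos hs hc _
  have hder := (((hasFDerivAt_log_expSum (a := fun (ω : σ → ℤ) i => (ω i : ℝ)) hs hc _).comp x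
    (hasFDerivAt_log_pi hx)).exp).congr_of_eventuallyEq (f₁ := q) <| hev.mono fun z hz => by
      simp only [hz, Function.comp_apply, exp_log (expSum_pos hs hc _)]
  rw [hder.fderiv]
  have hxi := (hx i).ne'
  simp only [Function.comp_apply, ← hev.self_of_nhds, exp_log hqx, smul_apply,
    ContinuousLinearMap.comp_apply, LinearMap.coe_toContinuousLinearMap', Matrix.toLin'_apply,
    Matrix.mulVec_single_one, Matrix.col_diagonal, dotCLM_apply, dotProduct_single, smul_eq_mul]
  field_simp

end LogCoordinates

/-- The toric logarithmic-derivative (Newton polytope) map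
`μ(x)ᵢ = Σ_j v_j·(xᵢ·∂q_j/∂xᵢ(x))/q_j(x)` is an orientation-preserving smooth
diffeomorphism from the positive orthant onto the interior of
`P = Σ_j v_j·New(q_j)`, with everywhere strictly positive Jacobian determinant. -/
theorem stmt_13 (n e : ℕ) (A : Fin e → Finset (Fin n → ℤ)) (hA : ∀ j, (A j).Nonempty)
    (c : Fin e → (Fin n → ℤ) → ℝ) (hc : ∀ j, ∀ ω ∈ A j, 0 < c j ω)
    (q : Fin e → (Fin n → ℝ) → ℝ)
    (hq : ∀ j x, q j x = ∑ ω ∈ A j, c j ω * ∏ i, x i ^ (ω i))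
    (v : Fin e → ℝ) (hv : ∀ j, 0 < v j)
    (P : Set (Fin n → ℝ))
    (hP : P = ∑ j, v j •
        convexHull ℝ ((fun ω : Fin n → ℤ => fun i => (ω i : ℝ)) '' ↑(A j)))
    (hPdim : (interior P).Nonempty)
    (S : Set (Fin n → ℝ)) (hS : S = Set.univ.pi fun _ : Fin n => Set.Ioi (0 : ℝ))
    (μ : (Fin n → ℝ) → (Fin n → ℝ))
    (hμ : ∀ x, μ x = fun i =>
        ∑ j, v j * (x i * fderiv ℝ (q j) x (Pi.single i 1)) / q j x) :
    (∃ Φ : PartialHomeomorph (Fin n → ℝ) (Fin n → ℝ),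
        Φ.source = S ∧ Φ.target = interior P ∧ (∀ x ∈ S, Φ x = μ x) ∧
        ContDiffOn ℝ (⊤ : ℕ∞) Φ S ∧ ContDiffOn ℝ (⊤ : ℕ∞) Φ.symm (interior P)) ∧
      ∀ x ∈ S, 0 < LinearMap.det
        ((fderiv ℝ μ x : (Fin n → ℝ) →L[ℝ] (Fin n → ℝ)) :
          (Fin n → ℝ) →ₗ[ℝ] (Fin n → ℝ)) := by
  subst hS
  set a : (Fin n → ℤ) → Fin n → ℝ := fun ω i => (ω i : ℝ)
  subst hP
  set S : Set (Fin n → ℝ) := Set.univ.pi fun _ => Set.Ioi 0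
  have hSpos {x} (hx : x ∈ S) (i) : 0 < x i := hx i trivial
  have hSopen : IsOpen S := isOpen_set_pi Set.finite_univ fun _ _ => isOpen_Ioi
  have hμS : Set.EqOn μ (momentMap A c a v ∘ fun x i => log (x i)) S := fun x hx => by
    rw [hμ]
    ext i
    simp only [mul_div_assoc, momentMap, Function.comp_apply, Finset.sum_apply, Pi.smul_apply,
      smul_eq_mul]
    refine Finset.sum_congr rfl fun j _ => ?_
    rw [← log_derivative_laurent (hA j) (hc j) (hq j) (hSpos hx) i, mul_div_assoc]
  have hsmooth : ContDiffOn ℝ (⊤ : ℕ∞) μ S :=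
    ((contDiff_momentMap hA hc).comp_contDiffOn contDiffOn_log_pi).congr hμS
  have hemb := isOpenEmbedding_momentMap hA hc hv hPdim
  have hrange := range_momentMap hA hc hv hPdim
  let Ψ := hemb.toOpenPartialHomeomorph (momentMap A c a v)
  have hinv : ContDiffOn ℝ (⊤ : ℕ∞) (fun p i => exp (Ψ.symm p i))
      (interior (∑ j, v j • convexHull ℝ (a '' (A j)))) := by
    refine contDiffOn_pi.2 fun i => ContDiffOn.exp ?_
    refine (contDiff_apply ℝ ℝ i).comp_contDiffOn fun p hp => ContDiffAt.contDiffWithinAt ?_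
    exact Ψ.contDiffAt_symm (by simpa [Ψ, hrange] using hp)
      (hasFDerivAt_momentMap_equiv hA hc hv hPdim _) (contDiff_momentMap hA hc).contDiffAt
  refine ⟨⟨{  toFun := μ
              invFun := fun p i => exp (Ψ.symm p i)
              source := S
              target := interior (∑ j, v j • convexHull ℝ (a '' (A j)))
              map_source' := fun x hx => by
                rw [hμS hx, ← hrange]
                exact ⟨_, rfl⟩
              map_target' := fun p _ i _ => exp_pos _
              left_inv' := fun x hx => by
                ext i
                rw [hμS hx, Function.comp_apply, hemb.toOpenPartialHomeomorph_left_inv,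
                  exp_log (hSpos hx i)]
              right_inv' := fun p hp => by
                rw [hμS fun i _ => exp_pos _]
                simp only [Function.comp_apply, log_exp]
                exact hemb.toOpenPartialHomeomorph_right_inv _ (hrange ▸ hp)
              continuousOn_toFun := hsmooth.continuousOn
              continuousOn_invFun := hinv.continuousOn }, rfl, rfl, fun _ _ => rfl, hsmooth, hinv⟩,
    fun x hx => ?_⟩
  have hder := ((hasFDerivAt_momentMap (a := a) (v := v) hA hc _).comp x
    (hasFDerivAt_log_pi (hSpos hx))).congr_of_eventuallyEq
      (hμS.eventuallyEq_of_mem (hSopen.mem_nhds hx))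
  rw [hder.fderiv, ContinuousLinearMap.toLinearMap_comp, LinearMap.coe_toContinuousLinearMap,
    LinearMap.coe_toContinuousLinearMap, LinearMap.det_comp, LinearMap.det_toLin',
    LinearMap.det_toLin', Matrix.det_diagonal]
  exact mul_pos (posDef_momentHessian hA hc hv hPdim _).det_pos
    (Finset.prod_pos fun i _ => inv_pos.2 (hSpos hx i))
end
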